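/- arXiv:math/0507472 — 2 statements merged into one kernel-verified Lean document; each statement's English description precedes it below -/
import Mathlib

section
/- Let S be a finite set of points in ℝ². Then ⋃_{i ≥ 0} Tⁱ(S) is dense in ℝ² if and only if S is not one of the following: (1) the empty set; (2) a set of collinear points; (3) a set of collinear points together with one additional point not on their common line; (4) the four vertices of a nondegenerate parallelogram; (5) the four vertices of a nondegenerate parallelogram together with the intersection point of its two diagonals. -/
open Set Filter

noncomputable section

/-- The line through two points in the plane `ℝ × ℝ`. -/
def line (a b : ℝ × ℝ) : AffineSubspace ℝ (ℝ × ℝ) := affineSpan ℝ {a, b}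

/-- The intersection operation `T`: the set of all intersection points of pairs of
distinct lines through pairs of distinct points of `S`. -/
def interT (S : Set (ℝ × ℝ)) : Set (ℝ × ℝ) :=
  {x | ∃ a ∈ S, ∃ b ∈ S, ∃ c ∈ S, ∃ d ∈ S,
    a ≠ b ∧ c ≠ d ∧ line a b ≠ line c d ∧ x ∈ line a b ∧ x ∈ line c d}

/-- `A, B, C, D` are the vertices of a nondegenerate parallelogram:
`B - A = C - D ≠ 0` and `A, B, D` are not collinear. -/
def IsParallelogram (A B C D : ℝ × ℝ) : Prop :=
  B - A = C - D ∧ B - A ≠ 0 ∧ ¬ Collinear ℝ ({A, B, D} : Set (ℝ × ℝ))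

/-!
Let `K` be closed, and closed under `T`. If `K` contains a triangle together with an interior point,
then sending one side of the triangle to infinity turns `T` into an operation on a quadrant under
which a rectangle yields its centre; the midpoint construction fills a segment issuing from the
vertex, then its projections to the axes fill a rectangle, so `K` has nonempty interior and hence is
the whole plane. Four points of `K` in general position that do not form a parallelogram give such a
triangle: in convex position, it is spanned by a side and the intersection point of the two adjacent
sides, and the diagonals meet in its interior.

If no point of `S` can be removed to leave a collinear set, then `S` contains four points in general
position. Should they form a parallelogram, any fifth point other than its centre forms with three
of the vertices a quadruple in general position that is not a parallelogram.

Conversely, a line together with one point, and a parallelogram together with its centre, are closed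
under `T`.
-/

/-- The signed area `u₁v₂ - u₂v₁` of the parallelogram spanned by two plane vectors; it detects
parallelism. -/
def wedge {R : Type*} [CommRing R] (u v : R × R) : R := u.1 * v.2 - u.2 * v.1

lemma wedge_swap {R : Type*} [CommRing R] (u v : R × R) : wedge u v = -wedge v u := by
  simp only [wedge]; ring

lemma wedge_smul_right {R : Type*} [CommRing R] (r : R) (u v : R × R) :
    wedge u (r • v) = r * wedge u v := by
  simp only [wedge, Prod.smul_fst, Prod.smul_snd, smul_eq_mul]; ring

lemma wedge_smul_left {R : Type*} [CommRing R] (r : R) (u v : R × R) :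
    wedge (r • u) v = r * wedge u v := by
  simp only [wedge, Prod.smul_fst, Prod.smul_snd, smul_eq_mul]; ring

lemma wedge_self {R : Type*} [CommRing R] (u : R × R) : wedge u u = 0 := by
  simp only [wedge]; ring

lemma wedge_eq_zero_iff {k : Type*} [Field k] {u v : k × k} (hu : u ≠ 0) :
    wedge u v = 0 ↔ ∃ r : k, r • u = v := by
  constructor
  · intro h
    have h : u.1 * v.2 - u.2 * v.1 = 0 := h
    by_cases h₁ : u.1 = 0
    · have h₂ : u.2 ≠ 0 := fun h₂ => hu (Prod.ext h₁ h₂)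
      refine ⟨v.2 / u.2, Prod.ext ?_ (div_mul_cancel₀ _ h₂)⟩
      have : v.1 = 0 := by simpa [h₁, h₂] using h
      simp [h₁, this]
    · refine ⟨v.1 / u.1, Prod.ext (div_mul_cancel₀ _ h₁) ?_⟩
      simp only [Prod.smul_snd, smul_eq_mul]
      field_simp
      linear_combination -h
  · rintro ⟨r, rfl⟩
    rw [wedge_smul_right, wedge_self, mul_zero]

section Line

variable {a b c d x : ℝ × ℝ}

lemma mem_line_iff_wedge (hab : a ≠ b) : x ∈ line a b ↔ wedge (b - a) (x - a) = 0 := by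
  rw [wedge_eq_zero_iff (sub_ne_zero.2 hab.symm), line,
    mem_affineSpan_pair_iff_exists_lineMap_eq]
  simp only [AffineMap.lineMap_apply, vsub_eq_sub, vadd_eq_add, eq_sub_iff_add_eq]

lemma collinear_triple_iff_mem_line (hab : a ≠ b) : Collinear ℝ {a, b, c} ↔ c ∈ line a b := by
  refine ⟨fun h => h.mem_affineSpan_of_mem_of_ne (by simp) (by simp) (by simp) hab, fun h => ?_⟩
  have := collinear_insert_of_mem_affineSpan_pair h
  rwa [insert_comm, pair_comm] at this

lemma collinear_triple_iff_wedge : Collinear ℝ {a, b, c} ↔ wedge (b - a) (c - a) = 0 := by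
  rcases eq_or_ne a b with rfl | hab
  · simp [wedge, collinear_pair]
  · rw [collinear_triple_iff_mem_line hab, mem_line_iff_wedge hab]

lemma direction_line (a b : ℝ × ℝ) : (line a b).direction = ℝ ∙ (b - a) := by
  rw [line, direction_affineSpan, vectorSpan_pair_rev, vsub_eq_sub]

lemma line_eq_line_iff_wedge (hab : a ≠ b) (hcd : c ≠ d) (hx : x ∈ line a b) (hx' : x ∈ line c d) :
    line a b = line c d ↔ wedge (b - a) (d - c) = 0 := by
  have hdc := sub_ne_zero.2 hcd.symm
  rw [AffineSubspace.eq_iff_direction_eq_of_mem hx hx', direction_line, direction_line,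
    wedge_eq_zero_iff (sub_ne_zero.2 hab.symm)]
  constructor
  · intro h
    rw [← Submodule.mem_span_singleton, h]
    exact Submodule.mem_span_singleton_self _
  · rintro ⟨r, hr⟩
    have hr₀ : r ≠ 0 := by rintro rfl; exact hdc (by rw [← hr, zero_smul])
    rw [← hr, Submodule.span_singleton_smul_eq hr₀.isUnit]

lemma mem_interT_iff_wedge {S : Set (ℝ × ℝ)} :
    x ∈ interT S ↔ ∃ a ∈ S, ∃ b ∈ S, ∃ c ∈ S, ∃ d ∈ S, wedge (b - a) (d - c) ≠ 0 ∧
      wedge (b - a) (x - a) = 0 ∧ wedge (d - c) (x - c) = 0 := by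
  constructor
  · rintro ⟨a, ha, b, hb, c, hc, d, hd, hab, hcd, hne, hx, hx'⟩
    exact ⟨a, ha, b, hb, c, hc, d, hd, mt (line_eq_line_iff_wedge hab hcd hx hx').2 hne,
      (mem_line_iff_wedge hab).1 hx, (mem_line_iff_wedge hcd).1 hx'⟩
  · rintro ⟨a, ha, b, hb, c, hc, d, hd, hne, hx, hx'⟩
    have hab : a ≠ b := by rintro rfl; simp [wedge] at hne
    have hcd : c ≠ d := by rintro rfl; simp [wedge] at hne
    rw [← mem_line_iff_wedge hab] at hx
    rw [← mem_line_iff_wedge hcd] at hx'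
    exact ⟨a, ha, b, hb, c, hc, d, hd, hab, hcd,
      mt (line_eq_line_iff_wedge hab hcd hx hx').1 hne, hx, hx'⟩

end Line

lemma interT_mono : Monotone interT := by
  rintro S S' h x ⟨a, ha, b, hb, c, hc, d, hd, hx⟩
  exact ⟨a, h ha, b, h hb, c, h hc, d, h hd, hx⟩

lemma collinear_affineSpan_iff {k V P : Type*} [DivisionRing k] [AddCommGroup V] [Module k V]
    [AddTorsor V P] {s : Set P} : Collinear k (affineSpan k s : Set P) ↔ Collinear k s := by
  rw [Collinear, Collinear, ← AffineSubspace.direction_eq_vectorSpan, direction_affineSpan]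

lemma collinear_line (p q : ℝ × ℝ) : Collinear ℝ (line p q : Set (ℝ × ℝ)) :=
  collinear_affineSpan_iff.2 (collinear_pair ℝ p q)

lemma line_eq_of_mem {a b p q : ℝ × ℝ} (ha : a ∈ line p q) (hb : b ∈ line p q) (hab : a ≠ b) :
    line a b = line p q := by
  rw [line, (collinear_line p q).affineSpan_eq_of_ne ha hb hab, AffineSubspace.affineSpan_coe]

lemma exists_mem_notMem_line {S : Set (ℝ × ℝ)} (hS : ¬ Collinear ℝ S) (p q : ℝ × ℝ) :
    ∃ r ∈ S, r ∉ line p q := by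
  by_contra! h
  exact hS ((collinear_line p q).subset h)

lemma subset_interT {S : Set (ℝ × ℝ)} (hS : ¬ Collinear ℝ S) : S ⊆ interT S := by
  intro p hp
  obtain ⟨q, hq, hqp⟩ := exists_mem_notMem_line hS p p
  obtain ⟨r, hr, hrpq⟩ := exists_mem_notMem_line hS p q
  have hpr : p ≠ r := by rintro rfl; exact hrpq (left_mem_affineSpan_pair ℝ p q)
  have hpq : p ≠ q := by rintro rfl; exact hqp (left_mem_affineSpan_pair ℝ p p)
  exact ⟨p, hp, q, hq, p, hp, r, hr, hpq, hpr,
    fun h => hrpq (h ▸ right_mem_affineSpan_pair ℝ p r),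
    left_mem_affineSpan_pair ℝ p q, left_mem_affineSpan_pair ℝ p r⟩

/-- A set closed under the operation `T`: it contains the intersection point of any two distinct
lines spanned by its points. -/
def IsInterClosed (K : Set (ℝ × ℝ)) : Prop := interT K ⊆ K

lemma isInterClosed_iUnion {S : Set (ℝ × ℝ)} (hS : ¬ Collinear ℝ S) :
    IsInterClosed (⋃ i, interT^[i] S) := by
  have hmono : Monotone fun i => interT^[i] S :=
    interT_mono.monotone_iterate_of_le_map (subset_interT hS)
  rintro x ⟨a, ha, b, hb, c, hc, d, hd, hx⟩
  simp only [mem_iUnion] at ha hb hc hd ⊢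
  obtain ⟨i, ha⟩ := ha
  obtain ⟨j, hb⟩ := hb
  obtain ⟨k, hc⟩ := hc
  obtain ⟨l, hd⟩ := hd
  refine ⟨max (max i j) (max k l) + 1, ?_⟩
  rw [Function.iterate_succ_apply']
  exact ⟨a, hmono (by simp) ha, b, hmono (by simp) hb, c, hmono (by simp) hc,
    d, hmono (by simp) hd, hx⟩

lemma IsInterClosed.iUnion_subset {S F : Set (ℝ × ℝ)} (hF : IsInterClosed F) (hSF : S ⊆ F) :
    ⋃ i, interT^[i] S ⊆ F := by
  refine Set.iUnion_subset fun i => ?_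
  induction i with
  | zero => exact hSF
  | succ i ih =>
    rw [Function.iterate_succ_apply']
    exact (interT_mono ih).trans hF

lemma IsInterClosed.not_dense_iUnion {S F : Set (ℝ × ℝ)} (hF : IsInterClosed F)
    (hF' : ¬ Dense F) (hSF : S ⊆ F) : ¬ Dense (⋃ i, interT^[i] S) :=
  fun h => hF' (h.mono (hF.iUnion_subset hSF))

lemma IsInterClosed.mem_of_wedge {K : Set (ℝ × ℝ)} (hK : IsInterClosed K) {a b c d x : ℝ × ℝ}
    (ha : a ∈ K) (hb : b ∈ K) (hc : c ∈ K) (hd : d ∈ K) (h : wedge (b - a) (d - c) ≠ 0)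
    (hx : wedge (b - a) (x - a) = 0) (hx' : wedge (d - c) (x - c) = 0) : x ∈ K :=
  hK (mem_interT_iff_wedge.2 ⟨a, ha, b, hb, c, hc, d, hd, h, hx, hx'⟩)

lemma line_map (e : (ℝ × ℝ) ≃ᵃ[ℝ] (ℝ × ℝ)) (a b : ℝ × ℝ) :
    (line a b).map e.toAffineMap = line (e a) (e b) := by
  rw [line, AffineSubspace.map_span, image_pair]; rfl

lemma IsInterClosed.preimage {K : Set (ℝ × ℝ)} (hK : IsInterClosed K)
    (e : (ℝ × ℝ) ≃ᵃ[ℝ] (ℝ × ℝ)) : IsInterClosed (e ⁻¹' K) := by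
  rintro x ⟨a, ha, b, hb, c, hc, d, hd, hab, hcd, hne, hx, hx'⟩
  refine hK ⟨e a, ha, e b, hb, e c, hc, e d, hd, e.injective.ne hab, e.injective.ne hcd, ?_, ?_, ?_⟩
  · rw [← line_map, ← line_map]
    exact fun h => hne ((AffineSubspace.gciMapComap e.injective).l_injective h)
  · rw [← line_map]
    exact AffineSubspace.mem_map_of_mem _ hx
  · rw [← line_map]
    exact AffineSubspace.mem_map_of_mem _ hx'

/-- The intersection point of the lines `ab` and `cd`; if these are parallel, the quotient is
`0` and the value is `a`. -/
def lineInter (a b c d : ℝ × ℝ) : ℝ × ℝ :=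
  a + (wedge (c - a) (d - c) / wedge (b - a) (d - c)) • (b - a)

section LineInter

variable {a b c d x : ℝ × ℝ}

lemma wedge_lineInter_left : wedge (b - a) (lineInter a b c d - a) = 0 := by
  rw [lineInter, add_sub_cancel_left, wedge_smul_right, wedge_self, mul_zero]

lemma wedge_lineInter_right (h : wedge (b - a) (d - c) ≠ 0) :
    wedge (d - c) (lineInter a b c d - c) = 0 := by
  have key : wedge (d - c) (lineInter a b c d - c) = wedge (c - a) (d - c) -
      wedge (c - a) (d - c) / wedge (b - a) (d - c) * wedge (b - a) (d - c) := by
    simp only [lineInter, wedge, Prod.fst_sub, Prod.snd_sub, Prod.fst_add, Prod.snd_add,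
      Prod.smul_fst, Prod.smul_snd, smul_eq_mul]
    ring
  rw [key, div_mul_cancel₀ _ h, sub_self]

lemma eq_lineInter (h : wedge (b - a) (d - c) ≠ 0) (hx : wedge (b - a) (x - a) = 0)
    (hx' : wedge (d - c) (x - c) = 0) : x = lineInter a b c d := by
  have hab : b - a ≠ 0 := by rintro hab; simp [hab, wedge] at h
  obtain ⟨r, hr⟩ := (wedge_eq_zero_iff hab).1 hx
  obtain rfl : x = r • (b - a) + a := eq_add_of_sub_eq hr.symm
  have : r = wedge (c - a) (d - c) / wedge (b - a) (d - c) := by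
    rw [eq_div_iff h]
    simp only [wedge, Prod.fst_sub, Prod.snd_sub, Prod.fst_add, Prod.snd_add,
      Prod.smul_fst, Prod.smul_snd, smul_eq_mul] at hx' ⊢
    linear_combination -hx'
  rw [lineInter, ← this, add_comm]

end LineInter

lemma isInterClosed_closure {U : Set (ℝ × ℝ)} (hU : IsInterClosed U) :
    IsInterClosed (closure U) := by
  intro x hx
  obtain ⟨a, ha, b, hb, c, hc, d, hd, hne, hx, hx'⟩ := mem_interT_iff_wedge.1 hx
  let den : (ℝ × ℝ) × (ℝ × ℝ) × (ℝ × ℝ) × (ℝ × ℝ) → ℝ := fun p =>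
    wedge (p.2.1 - p.1) (p.2.2.2 - p.2.2.1)
  have hden : Continuous den := by simp only [den, wedge]; fun_prop
  have hcont : ContinuousAt (fun p : (ℝ × ℝ) × (ℝ × ℝ) × (ℝ × ℝ) × (ℝ × ℝ) =>
      lineInter p.1 p.2.1 p.2.2.1 p.2.2.2) (a, b, c, d) := by
    have hnum : Continuous fun p : (ℝ × ℝ) × (ℝ × ℝ) × (ℝ × ℝ) × (ℝ × ℝ) =>
        wedge (p.2.2.1 - p.1) (p.2.2.2 - p.2.2.1) := by simp only [wedge]; fun_prop
    exact continuousAt_fst.add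
      ((hnum.continuousAt.div hden.continuousAt hne).smul (by fun_prop))
  have hmem : (a, b, c, d) ∈ closure (U ×ˢ U ×ˢ U ×ˢ U) := by
    simp only [closure_prod_eq]
    exact ⟨ha, hb, hc, hd⟩
  rw [eq_lineInter hne hx hx']
  refine mem_closure_of_frequently_of_tendsto ?_ hcont
  refine ((mem_closure_iff_frequently.1 hmem).and_eventually
    (hden.continuousAt.eventually_ne hne)).mono ?_
  rintro ⟨a, b, c, d⟩ ⟨⟨ha, hb, hc, hd⟩, h⟩
  exact hU.mem_of_wedge ha hb hc hd h wedge_lineInter_left (wedge_lineInter_right h)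

lemma exists_smul_add_mem_of_isOpen {E : Type*} [AddCommGroup E] [TopologicalSpace E]
    [ContinuousAdd E] [Module ℝ E] [ContinuousSMul ℝ E] {W : Set E} (hW : IsOpen W) {w : E}
    (hw : w ∈ W) (u : E) : ∃ r : ℝ, r ≠ 0 ∧ r • u + w ∈ W := by
  have hcont : ContinuousAt (fun r : ℝ => r • u + w) 0 := by fun_prop
  have hmem : ∀ᶠ r : ℝ in nhds 0, r • u + w ∈ W :=
    hcont.eventually_mem (hW.mem_nhds (by simpa using hw))
  have hne : ∀ᶠ r : ℝ in nhdsWithin 0 {0}ᶜ, r ≠ 0 := eventually_mem_nhdsWithin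
  exact (hne.and (hmem.filter_mono nhdsWithin_le_nhds)).exists

lemma exists_wedge_ne_zero {u : ℝ × ℝ} (hu : u ≠ 0) : ∃ v, wedge u v ≠ 0 := by
  by_contra! h
  have h₁ : u.1 = 0 := by simpa [wedge] using h (0, 1)
  have h₂ : u.2 = 0 := by simpa [wedge] using h (1, 0)
  exact hu (Prod.ext h₁ h₂)

lemma IsInterClosed.eq_univ_of_interior_nonempty {K : Set (ℝ × ℝ)} (hK : IsInterClosed K)
    (h : (interior K).Nonempty) : K = univ := by
  obtain ⟨w, hw⟩ := h
  refine eq_univ_of_forall fun x => ?_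
  rcases eq_or_ne x w with rfl | hxw
  · exact interior_subset hw
  obtain ⟨u, hu⟩ := exists_wedge_ne_zero (sub_ne_zero.2 hxw)
  obtain ⟨r, hr, hv⟩ := exists_smul_add_mem_of_isOpen isOpen_interior hw u
  obtain ⟨s, hs, hw'⟩ := exists_smul_add_mem_of_isOpen isOpen_interior hw (x - w)
  obtain ⟨t, ht, hv'⟩ := exists_smul_add_mem_of_isOpen isOpen_interior hv (x - (r • u + w))
  refine hK.mem_of_wedge (interior_subset hw) (interior_subset hw') (interior_subset hv)
    (interior_subset hv') ?_ ?_ ?_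
  · have : wedge (s • (x - w)) (t • (x - (r • u + w))) = -(r * s * t) * wedge (x - w) u := by
      simp only [wedge, Prod.smul_fst, Prod.smul_snd, Prod.fst_sub, Prod.snd_sub, Prod.fst_add,
        Prod.snd_add, smul_eq_mul]
      ring
    rw [add_sub_cancel_right, add_sub_cancel_right, this]
    simp [hr, hs, ht, hu]
  · rw [add_sub_cancel_right, wedge_smul_left, wedge_self, mul_zero]
  · rw [add_sub_cancel_right, wedge_smul_left, wedge_self, mul_zero]

lemma ordConnected_of_isClosed_of_inter_Ioo_nonempty {α : Type*}
    [ConditionallyCompleteLinearOrder α] [TopologicalSpace α] [OrderTopology α] {I : Set α}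
    (hI : IsClosed I) (hI' : ∀ s ∈ I, ∀ t ∈ I, s < t → (I ∩ Ioo s t).Nonempty) :
    I.OrdConnected := by
  refine ⟨fun a ha b hb x hx => by_contra fun hxI => ?_⟩
  obtain ⟨s, ⟨hsI, hs⟩, hs_max⟩ :=
    (isCompact_Icc.inter_left hI).exists_isGreatest ⟨a, ha, le_rfl, hx.1⟩
  obtain ⟨t, ⟨htI, ht⟩, ht_min⟩ :=
    (isCompact_Icc.inter_left hI).exists_isLeast ⟨b, hb, hx.2, le_rfl⟩
  obtain ⟨m, hmI, hsm, hmt⟩ := hI' s hsI t htI <|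
    (hs.2.lt_of_ne (ne_of_mem_of_not_mem hsI hxI)).trans_le ht.1
  rcases le_total m x with hmx | hxm
  · exact hsm.not_ge (hs_max ⟨hmI, hs.1.trans hsm.le, hmx⟩)
  · exact hmt.not_ge (ht_min ⟨hmI, hxm, hmt.le.trans ht.2⟩)

/-- The point with barycentric coordinates `1 : v₁ : v₂` in the triangle `(0,0), (1,0), (0,1)`,
with junk value `0` if these add up to `0`. This projective change of coordinates sends the
horizontal lines to the lines through `(1,0)` and the vertical lines to the lines through
`(0,1)`. -/
def baryChart (v : ℝ × ℝ) : ℝ × ℝ := (1 + v.1 + v.2)⁻¹ • v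

lemma one_add_neg_baryChart {v : ℝ × ℝ} (hv : 1 + v.1 + v.2 ≠ 0) :
    1 + (-baryChart v).1 + (-baryChart v).2 = (1 + v.1 + v.2)⁻¹ := by
  simp only [baryChart, Prod.fst_neg, Prod.snd_neg, Prod.smul_fst, Prod.smul_snd, smul_eq_mul]
  field_simp
  ring

lemma baryChart_neg_baryChart {v : ℝ × ℝ} (hv : 1 + v.1 + v.2 ≠ 0) :
    baryChart (-baryChart v) = -v := by
  rw [baryChart, one_add_neg_baryChart hv, inv_inv, baryChart, smul_neg, smul_inv_smul₀ hv]

lemma continuousAt_baryChart {v : ℝ × ℝ} (hv : 1 + v.1 + v.2 ≠ 0) :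
    ContinuousAt baryChart v := by
  have : Continuous fun v : ℝ × ℝ => 1 + v.1 + v.2 := by fun_prop
  exact (this.continuousAt.inv₀ hv).smul continuousAt_id

lemma baryChart_sub_right {v : ℝ × ℝ} (hv : 1 + v.1 + v.2 ≠ 0) :
    baryChart v - (1, 0) = (1 + v.1 + v.2)⁻¹ • (-(1 + v.2), v.2) := by
  ext <;> simp only [baryChart, Prod.fst_sub, Prod.snd_sub, Prod.smul_fst, Prod.smul_snd,
    smul_eq_mul] <;> field_simp <;> ring

lemma baryChart_sub_up {v : ℝ × ℝ} (hv : 1 + v.1 + v.2 ≠ 0) :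
    baryChart v - (0, 1) = (1 + v.1 + v.2)⁻¹ • (v.1, -(1 + v.1)) := by
  ext <;> simp only [baryChart, Prod.fst_sub, Prod.snd_sub, Prod.smul_fst, Prod.smul_snd,
    smul_eq_mul] <;> field_simp <;> ring

section BaryChart

variable {K : Set (ℝ × ℝ)} {v w : ℝ × ℝ}

-- The point is the intersection of the line through `(0,1)` and `v` with the line through `(1,0)`
-- and `w`, which become a vertical and a horizontal line in the chart.
lemma IsInterClosed.baryChart_mk_mem (hK : IsInterClosed K) (h₁ : ((1, 0) : ℝ × ℝ) ∈ K)
    (h₂ : ((0, 1) : ℝ × ℝ) ∈ K) (hv : 0 ≤ v) (hw : 0 ≤ w) (hvK : baryChart v ∈ K)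
    (hwK : baryChart w ∈ K) : baryChart (v.1, w.2) ∈ K := by
  have hv₁ : 0 ≤ v.1 := hv.1
  have hv₂ : 0 ≤ v.2 := hv.2
  have hw₁ : 0 ≤ w.1 := hw.1
  have hw₂ : 0 ≤ w.2 := hw.2
  have hvs : 1 + v.1 + v.2 ≠ 0 := by positivity
  have hws : 1 + w.1 + w.2 ≠ 0 := by positivity
  have hvw : 1 + v.1 + w.2 ≠ 0 := by positivity
  refine hK.mem_of_wedge h₂ hvK h₁ hwK ?_ ?_ ?_
  · rw [baryChart_sub_up hvs, baryChart_sub_right hws, wedge_smul_left, wedge_smul_right]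
    have : wedge (v.1, -(1 + v.1)) (-(1 + w.2), w.2) = -(1 + v.1 + w.2) := by
      simp only [wedge]; ring
    rw [this]
    simp [hvs, hws, neg_eq_zero, hvw, -neg_add_rev]
  · rw [baryChart_sub_up hvs, baryChart_sub_up hvw, wedge_smul_left, wedge_smul_right,
      wedge_self, mul_zero, mul_zero]
  · rw [baryChart_sub_right hws, baryChart_sub_right hvw, wedge_smul_left, wedge_smul_right,
      wedge_self, mul_zero, mul_zero]

-- In the chart the midpoint is where the diagonals of the rectangle with opposite vertices `v` and
-- `w` meet.
lemma IsInterClosed.baryChart_midpoint_mem (hK : IsInterClosed K) (h₁ : ((1, 0) : ℝ × ℝ) ∈ K)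
    (h₂ : ((0, 1) : ℝ × ℝ) ∈ K) (hv : 0 ≤ v) (hw : 0 ≤ w) (hvw₁ : v.1 ≠ w.1) (hvw₂ : v.2 ≠ w.2)
    (hvK : baryChart v ∈ K) (hwK : baryChart w ∈ K) : baryChart (midpoint ℝ v w) ∈ K := by
  have hp := hK.baryChart_mk_mem h₁ h₂ hv hw hvK hwK
  have hq := hK.baryChart_mk_mem h₁ h₂ hw hv hwK hvK
  obtain ⟨v₁, v₂⟩ := v
  obtain ⟨w₁, w₂⟩ := w
  obtain ⟨hv₁, hv₂⟩ : 0 ≤ v₁ ∧ 0 ≤ v₂ := hv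
  obtain ⟨hw₁, hw₂⟩ : 0 ≤ w₁ ∧ 0 ≤ w₂ := hw
  have hm : midpoint ℝ (v₁, v₂) (w₁, w₂) = ((v₁ + w₁) / 2, (v₂ + w₂) / 2) := by
    ext <;> simp [midpoint_eq_smul_add] <;> ring
  rw [hm]
  refine hK.mem_of_wedge hvK hwK hp hq ?_ ?_ ?_
  · have hwedge : wedge (baryChart (w₁, w₂) - baryChart (v₁, v₂))
        (baryChart (w₁, v₂) - baryChart (v₁, w₂)) =
        (w₁ - v₁) * (v₂ - w₂) * (2 + v₁ + v₂ + w₁ + w₂) /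
          ((1 + v₁ + v₂) * (1 + w₁ + w₂) * (1 + w₁ + v₂) * (1 + v₁ + w₂)) := by
      simp only [wedge, baryChart, Prod.smul_mk, Prod.fst_sub, Prod.snd_sub, smul_eq_mul]
      field_simp
      ring
    have : w₁ - v₁ ≠ 0 := sub_ne_zero.2 hvw₁.symm
    have : v₂ - w₂ ≠ 0 := sub_ne_zero.2 hvw₂
    rw [hwedge]
    positivity
  · simp only [wedge, baryChart, Prod.smul_mk, Prod.fst_sub, Prod.snd_sub, smul_eq_mul]
    field_simp
    ring
  · simp only [wedge, baryChart, Prod.smul_mk, Prod.fst_sub, Prod.snd_sub, smul_eq_mul]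
    field_simp
    ring

lemma IsInterClosed.baryChart_smul_mem (hK : IsInterClosed K) (hcl : IsClosed K)
    (h₀ : (0 : ℝ × ℝ) ∈ K) (h₁ : ((1, 0) : ℝ × ℝ) ∈ K) (h₂ : ((0, 1) : ℝ × ℝ) ∈ K)
    (hv₁ : 0 < v.1) (hv₂ : 0 < v.2) (hvK : baryChart v ∈ K) {r : ℝ} (hr : r ∈ Icc 0 1) :
    baryChart (r • v) ∈ K := by
  have nonneg : ∀ r ∈ Icc (0 : ℝ) 1, 0 ≤ r • v := fun r hr => smul_nonneg hr.1 ⟨hv₁.le, hv₂.le⟩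
  let I : Set ℝ := Icc 0 1 ∩ (fun r => baryChart (r • v)) ⁻¹' K
  have hI : IsClosed I := by
    refine ContinuousOn.preimage_isClosed_of_isClosed (fun r hr => ?_) isClosed_Icc hcl
    obtain ⟨h₁, h₂⟩ : 0 ≤ (r • v).1 ∧ 0 ≤ (r • v).2 := nonneg r hr
    exact (ContinuousAt.comp (f := fun r : ℝ => r • v)
      (continuousAt_baryChart (by positivity)) (by fun_prop)).continuousWithinAt
  have hI' : ∀ s ∈ I, ∀ t ∈ I, s < t → (I ∩ Ioo s t).Nonempty := by
    rintro s ⟨hs, hsK⟩ t ⟨ht, htK⟩ hst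
    have hlt : midpoint ℝ s t ∈ Ioo s t :=
      ⟨(left_lt_lineMap_iff_lt (inv_pos.2 two_pos)).2 hst,
        (lineMap_lt_right_iff_lt two_inv_lt_one).2 hst⟩
    refine ⟨midpoint ℝ s t, ⟨?_, ?_⟩, hlt⟩
    · exact (convex_Icc 0 1).midpoint_mem hs ht
    · have hmid : midpoint ℝ s t • v = midpoint ℝ (s • v) (t • v) :=
        (LinearMap.toSpanSingleton ℝ (ℝ × ℝ) v).toAffineMap.map_midpoint s t
      rw [mem_preimage, hmid]
      exact hK.baryChart_midpoint_mem h₁ h₂ (nonneg s hs) (nonneg t ht)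
        (by simp [hst.ne, hv₁.ne']) (by simp [hst.ne, hv₂.ne']) hsK htK
  have h0 : (0 : ℝ) ∈ I := ⟨by simp, by simpa [baryChart] using h₀⟩
  have h1 : (1 : ℝ) ∈ I := ⟨by simp, by simpa using hvK⟩
  exact ((ordConnected_of_isClosed_of_inter_Ioo_nonempty hI hI').out h0 h1 hr).2

lemma IsInterClosed.baryChart_mem_of_mem_Ioo (hK : IsInterClosed K) (hcl : IsClosed K)
    (h₀ : (0 : ℝ × ℝ) ∈ K) (h₁ : ((1, 0) : ℝ × ℝ) ∈ K) (h₂ : ((0, 1) : ℝ × ℝ) ∈ K)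
    (hvK : baryChart v ∈ K) (hw : w ∈ Ioo 0 v.1 ×ˢ Ioo 0 v.2) : baryChart w ∈ K := by
  obtain ⟨⟨hw₁, hwv₁⟩, hw₂, hwv₂⟩ := hw
  have hv₁ : 0 < v.1 := hw₁.trans hwv₁
  have hv₂ : 0 < v.2 := hw₂.trans hwv₂
  have hmem : ∀ r ∈ Icc (0 : ℝ) 1, 0 ≤ r • v ∧ baryChart (r • v) ∈ K := fun r hr =>
    ⟨smul_nonneg hr.1 ⟨hv₁.le, hv₂.le⟩, hK.baryChart_smul_mem hcl h₀ h₁ h₂ hv₁ hv₂ hvK hr⟩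
  obtain ⟨hr, hrK⟩ := hmem (w.1 / v.1) ⟨by positivity, (div_le_one hv₁).2 hwv₁.le⟩
  obtain ⟨ht, htK⟩ := hmem (w.2 / v.2) ⟨by positivity, (div_le_one hv₂).2 hwv₂.le⟩
  have hrt := hK.baryChart_mk_mem h₁ h₂ hr ht hrK htK
  simpa only [Prod.smul_fst, Prod.smul_snd, smul_eq_mul, div_mul_cancel₀ _ hv₁.ne',
    div_mul_cancel₀ _ hv₂.ne'] using hrt

lemma IsInterClosed.eq_univ_of_baryChart_mem (hK : IsInterClosed K) (hcl : IsClosed K)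
    (h₀ : (0 : ℝ × ℝ) ∈ K) (h₁ : ((1, 0) : ℝ × ℝ) ∈ K) (h₂ : ((0, 1) : ℝ × ℝ) ∈ K)
    (hv₁ : 0 < v.1) (hv₂ : 0 < v.2) (hvK : baryChart v ∈ K) : K = univ := by
  have hm : (1 / 2 : ℝ) • v ∈ Ioo 0 v.1 ×ˢ Ioo 0 v.2 := by
    refine ⟨⟨?_, ?_⟩, ?_, ?_⟩ <;> simp only [Prod.smul_fst, Prod.smul_snd, smul_eq_mul] <;> linarith
  have hsum : 1 + ((1 / 2 : ℝ) • v).1 + ((1 / 2 : ℝ) • v).2 ≠ 0 := by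
    simp only [Prod.smul_fst, Prod.smul_snd, smul_eq_mul]; positivity
  set z := baryChart ((1 / 2 : ℝ) • v) with hz
  have hzsum : 1 + (-z).1 + (-z).2 ≠ 0 := by
    rw [one_add_neg_baryChart hsum]; exact inv_ne_zero hsum
  -- `x ↦ -baryChart (-x)` is the inverse of the chart.
  have hinv : ContinuousAt (fun x => -baryChart (-x)) z :=
    (ContinuousAt.comp (f := Neg.neg) (continuousAt_baryChart hzsum) continuousAt_neg).neg
  have hbox : ∀ᶠ x in nhds z, -baryChart (-x) ∈ Ioo 0 v.1 ×ˢ Ioo 0 v.2 := by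
    refine hinv.eventually_mem ((isOpen_Ioo.prod isOpen_Ioo).mem_nhds ?_)
    rwa [hz, baryChart_neg_baryChart hsum, neg_neg]
  have hev : ∀ᶠ x in nhds z, 1 + (-x).1 + (-x).2 ≠ 0 :=
    ContinuousAt.eventually_ne (by fun_prop) hzsum
  refine hK.eq_univ_of_interior_nonempty ⟨z, mem_interior_iff_mem_nhds.2 ?_⟩
  filter_upwards [hbox, hev] with x hx hx'
  simpa [baryChart_neg_baryChart hx'] using hK.baryChart_mem_of_mem_Ioo hcl h₀ h₁ h₂ hvK hx

end BaryChart

lemma exists_affineEquiv_of_wedge_ne_zero {k : Type*} [Field k] {u v : k × k}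
    (h : wedge u v ≠ 0) (o : k × k) :
    ∃ e : (k × k) ≃ᵃ[k] (k × k), ∀ z : k × k, e z = o + (z.1 • u + z.2 • v) := by
  let f : k × k →ₗ[k] k × k :=
    (LinearMap.toSpanSingleton k (k × k) u).coprod (LinearMap.toSpanSingleton k (k × k) v)
  have hf : Function.Injective f := by
    rw [← LinearMap.ker_eq_bot, LinearMap.ker_eq_bot']
    rintro ⟨x, y⟩ hxy
    have h₁ : x * u.1 + y * v.1 = 0 := congrArg Prod.fst hxy
    have h₂ : x * u.2 + y * v.2 = 0 := congrArg Prod.snd hxy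
    have hx : x * wedge u v = 0 := by
      simp only [wedge]; linear_combination v.2 * h₁ - v.1 * h₂
    have hy : y * wedge u v = 0 := by
      simp only [wedge]; linear_combination u.1 * h₂ - u.2 * h₁
    exact Prod.ext ((mul_eq_zero.1 hx).resolve_right h) ((mul_eq_zero.1 hy).resolve_right h)
  refine ⟨(LinearEquiv.ofInjectiveEndo f hf).toAffineEquiv.trans (AffineEquiv.constVAdd k _ o),
    fun z => ?_⟩
  simp [f]

section Triangle

variable {K : Set (ℝ × ℝ)} {A B C D P Q : ℝ × ℝ}

lemma IsInterClosed.eq_univ_of_mem_triangle (hK : IsInterClosed K) (hcl : IsClosed K) (hA : A ∈ K)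
    (hP : P ∈ K) (hQ : Q ∈ K) (hC : C ∈ K) (h : ¬ Collinear ℝ {A, P, Q}) {z x y : ℝ}
    (hz : 0 < z) (hx : 0 < x) (hy : 0 < y)
    (hsum : (z + x + y) • C = z • A + x • P + y • Q) : K = univ := by
  rw [collinear_triple_iff_wedge] at h
  obtain ⟨e, he⟩ := exists_affineEquiv_of_wedge_ne_zero h A
  have heC : e (baryChart (x / z, y / z)) = C := by
    have hbary : baryChart (x / z, y / z) = ((z + x + y)⁻¹ * x, (z + x + y)⁻¹ * y) := by
      ext <;> simp only [baryChart, Prod.smul_mk, smul_eq_mul] <;> field_simp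
    refine smul_right_injective _ (by positivity : z + x + y ≠ 0) ?_
    simp only [he, hbary, hsum, smul_add, smul_smul]
    rw [mul_inv_cancel_left₀ (by positivity), mul_inv_cancel_left₀ (by positivity)]
    module
  have hpre : e ⁻¹' K = univ := by
    refine (hK.preimage e).eq_univ_of_baryChart_mem (v := (x / z, y / z))
      (hcl.preimage e.continuous_of_finiteDimensional) ?_ ?_ ?_ (div_pos hx hz) (div_pos hy hz)
      (by rwa [mem_preimage, heC]) <;> simpa [he]
  exact e.surjective.preimage_injective (hpre.trans preimage_univ.symm)

lemma wedge_eq_zero_of_smul_eq_smul {k : Type*} [Field k] {u v : k × k} {r s : k} (hr : r ≠ 0)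
    (h : r • v = s • u) : wedge u v = 0 := by
  have : r * wedge u v = s * wedge u u := by rw [← wedge_smul_right, h, wedge_smul_right]
  simpa [wedge_self, hr] using this

lemma IsInterClosed.exists_mem_smul_eq (hK : IsInterClosed K) (hA : A ∈ K) (hB : B ∈ K)
    (hC : C ∈ K) (hD : D ∈ K) (h : wedge (B - A) (C - A) ≠ 0) {α β γ δ : ℝ} (hαβ : α + β ≠ 0)
    (hsum : α + β = γ + δ) (hcomb : α • A + β • B = γ • C + δ • D) :
    ∃ X ∈ K, (α + β) • X = α • A + β • B := by
  obtain ⟨X, hX⟩ : ∃ X, (α + β) • X = α • A + β • B := ⟨_, smul_inv_smul₀ hαβ _⟩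
  have hne : wedge (B - A) (D - C) ≠ 0 := by
    have h₁ : α * A.1 + β * B.1 = γ * C.1 + δ * D.1 := congrArg Prod.fst hcomb
    have h₂ : α * A.2 + β * B.2 = γ * C.2 + δ * D.2 := congrArg Prod.snd hcomb
    have : δ * wedge (B - A) (D - C) = -(α + β) * wedge (B - A) (C - A) := by
      simp only [wedge, Prod.fst_sub, Prod.snd_sub]
      linear_combination (A.1 - B.1) * h₂ + (B.2 - A.2) * h₁ +
        ((B.1 - A.1) * C.2 - (B.2 - A.2) * C.1) * hsum
    exact right_ne_zero_of_mul (this ▸ mul_ne_zero (neg_ne_zero.2 hαβ) h)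
  refine ⟨X, hK.mem_of_wedge hA hB hC hD hne
    (wedge_eq_zero_of_smul_eq_smul hαβ (s := β) ?_)
    (wedge_eq_zero_of_smul_eq_smul hαβ (s := δ) ?_), hX⟩
  · rw [smul_sub, hX]; module
  · rw [smul_sub, hX, hcomb, hsum]; module

-- The side lines `AB` and `CD` meet in a point `X`, and the intersection point of the diagonals is
-- interior to the triangle `XBC`.
lemma IsInterClosed.eq_univ_of_convex_of_lt (hK : IsInterClosed K) (hcl : IsClosed K)
    (hA : A ∈ K) (hB : B ∈ K) (hC : C ∈ K) (hD : D ∈ K) (h : ¬ Collinear ℝ {A, B, C})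
    {α β γ δ : ℝ} (hα : 0 < α) (hβ : 0 < β) (hγ : 0 < γ) (hsum : α + γ = β + δ)
    (hcomb : α • A + γ • C = β • B + δ • D) (hβα : β < α) : K = univ := by
  rw [collinear_triple_iff_wedge] at h
  have hβα' : 0 < α + -β := by linarith
  obtain ⟨X, hXK, hX⟩ := hK.exists_mem_smul_eq hA hB hC hD (α := α) (β := -β) (γ := -γ) (δ := δ) h
    hβα'.ne' (by linarith) (by linear_combination (norm := module) hcomb)
  obtain ⟨R, hRK, hR⟩ := hK.exists_mem_smul_eq hA hC hB hD
    (by rwa [wedge_swap, neg_ne_zero]) (add_pos hα hγ).ne' hsum hcomb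
  have hXBC : ¬ Collinear ℝ {X, B, C} := by
    rw [collinear_triple_iff_wedge]
    have hX₁ : (α + -β) * X.1 = α * A.1 + -β * B.1 := congrArg Prod.fst hX
    have hX₂ : (α + -β) * X.2 = α * A.2 + -β * B.2 := congrArg Prod.snd hX
    have : (α + -β) * wedge (B - X) (C - X) = α * wedge (B - A) (C - A) := by
      simp only [wedge, Prod.fst_sub, Prod.snd_sub]
      linear_combination (C.1 - B.1) * hX₂ + (B.2 - C.2) * hX₁
    exact right_ne_zero_of_mul (this ▸ mul_ne_zero hα.ne' h)
  refine hK.eq_univ_of_mem_triangle hcl hXK hB hC hRK hXBC hβα' hβ hγ ?_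
  rw [hX, neg_add_cancel_right, hR]
  module

end Triangle

/-- No three of the four points are collinear. -/
def InGeneralPosition (A B C D : ℝ × ℝ) : Prop :=
  ¬ Collinear ℝ {A, B, C} ∧ ¬ Collinear ℝ {A, B, D} ∧ ¬ Collinear ℝ {A, C, D} ∧
    ¬ Collinear ℝ {B, C, D}

section InGeneralPosition

variable {K : Set (ℝ × ℝ)} {A B C D : ℝ × ℝ}

lemma InGeneralPosition.swap_left (h : InGeneralPosition A B C D) : InGeneralPosition B A C D := by
  obtain ⟨h₁, h₂, h₃, h₄⟩ := h
  rw [insert_comm] at h₁ h₂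
  exact ⟨h₁, h₂, h₄, h₃⟩

lemma InGeneralPosition.swap_middle (h : InGeneralPosition A B C D) :
    InGeneralPosition A C B D := by
  obtain ⟨h₁, h₂, h₃, h₄⟩ := h
  rw [pair_comm] at h₁
  rw [insert_comm] at h₄
  exact ⟨h₁, h₃, h₂, h₄⟩

lemma InGeneralPosition.swap_right (h : InGeneralPosition A B C D) :
    InGeneralPosition A B D C := by
  obtain ⟨h₁, h₂, h₃, h₄⟩ := h
  rw [pair_comm] at h₃ h₄
  exact ⟨h₂, h₁, h₃, h₄⟩

lemma InGeneralPosition.isParallelogram (h : InGeneralPosition A B C D) (hsum : A + C = B + D) :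
    IsParallelogram A B C D :=
  ⟨by linear_combination (exp := 1) -hsum, sub_ne_zero.2 (ne₁₂_of_not_collinear h.2.1).symm, h.2.1⟩

lemma IsInterClosed.eq_univ_of_convex (hK : IsInterClosed K) (hcl : IsClosed K)
    (hA : A ∈ K) (hB : B ∈ K) (hC : C ∈ K) (hD : D ∈ K) (h : InGeneralPosition A B C D)
    {α β γ δ : ℝ} (hα : 0 < α) (hβ : 0 < β) (hγ : 0 < γ) (hδ : 0 < δ) (hsum : α + γ = β + δ)
    (hcomb : α • A + γ • C = β • B + δ • D) (hne : A + C ≠ B + D) : K = univ := by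
  rcases lt_trichotomy α β with hαβ | rfl | hβα
  · exact hK.eq_univ_of_convex_of_lt hcl hB hA hD hC h.swap_left.2.1 hβ hα hδ hsum.symm
      hcomb.symm hαβ
  · obtain rfl : γ = δ := add_left_cancel hsum
    have hADBC : InGeneralPosition A D B C := h.swap_right.swap_middle
    rcases lt_trichotomy α γ with hαγ | rfl | hγα
    · exact hK.eq_univ_of_convex_of_lt hcl hD hA hB hC hADBC.swap_left.1 hγ hα hα (add_comm γ α)
        (by rw [add_comm, ← hcomb]) hαγ
    · rw [← smul_add, ← smul_add] at hcomb
      exact absurd (smul_right_injective _ hα.ne' hcomb) hne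
    · exact hK.eq_univ_of_convex_of_lt hcl hA hD hC hB hADBC.swap_right.1 hα hγ hγ (add_comm α γ)
        (by rw [hcomb, add_comm]) hγα
  · exact hK.eq_univ_of_convex_of_lt hcl hA hB hC hD h.1 hα hβ hγ hsum hcomb hβα

lemma IsInterClosed.eq_univ_of_affine_relation (hK : IsInterClosed K) (hcl : IsClosed K)
    (hA : A ∈ K) (hB : B ∈ K) (hC : C ∈ K) (hD : D ∈ K) (h : InGeneralPosition A B C D)
    (h₁ : A + B ≠ C + D) (h₂ : A + C ≠ B + D) (h₃ : A + D ≠ B + C) {α β γ δ : ℝ} (hα : α ≠ 0)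
    (hβ : β ≠ 0) (hγ : γ ≠ 0) (hδ : δ ≠ 0) (hsum : α + β + γ + δ = 0)
    (hcomb : α • A + β • B + γ • C + δ • D = 0) : K = univ := by
  wlog hδ' : δ < 0 generalizing α β γ δ
  · refine this (neg_ne_zero.2 hα) (neg_ne_zero.2 hβ) (neg_ne_zero.2 hγ) (neg_ne_zero.2 hδ)
      (by linear_combination -hsum) (by linear_combination (norm := module) -hcomb) ?_
    exact neg_neg_iff_pos.2 (hδ.symm.lt_of_le (not_lt.1 hδ'))
  obtain ⟨s, rfl⟩ : ∃ s, δ = -s := ⟨-δ, (neg_neg δ).symm⟩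
  have hs : 0 < s := neg_neg_iff_pos.1 hδ'
  obtain rfl : s = α + β + γ := by linarith
  have hDABC : InGeneralPosition D A B C := h.swap_right.swap_middle.swap_left
  rcases hα.lt_or_gt with hα | hα <;> rcases hβ.lt_or_gt with hβ | hβ <;>
    rcases hγ.lt_or_gt with hγ | hγ
  · linarith
  · exact hK.eq_univ_of_mem_triangle hcl hD hA hB hC hDABC.1 hs (neg_pos.2 hα) (neg_pos.2 hβ)
      (by linear_combination (norm := module) hcomb)
  · exact hK.eq_univ_of_mem_triangle hcl hD hA hC hB hDABC.2.1 hs (neg_pos.2 hα) (neg_pos.2 hγ)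
      (by linear_combination (norm := module) hcomb)
  · exact hK.eq_univ_of_convex hcl hB hA hC hD h.swap_left hβ (neg_pos.2 hα) hγ hs (by ring)
      (by linear_combination (norm := module) hcomb) h₃.symm
  · exact hK.eq_univ_of_mem_triangle hcl hD hB hC hA hDABC.2.2.1 hs (neg_pos.2 hβ) (neg_pos.2 hγ)
      (by linear_combination (norm := module) hcomb)
  · exact hK.eq_univ_of_convex hcl hA hB hC hD h hα (neg_pos.2 hβ) hγ hs (by ring)
      (by linear_combination (norm := module) hcomb) h₂
  · exact hK.eq_univ_of_convex hcl hA hC hB hD h.swap_middle hα (neg_pos.2 hγ) hβ hs (by ring)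
      (by linear_combination (norm := module) hcomb) h₁
  · exact hK.eq_univ_of_mem_triangle hcl hA hB hC hD h.1 hα hβ hγ
      (by linear_combination (norm := module) -hcomb)

lemma IsInterClosed.eq_univ_of_inGeneralPosition (hK : IsInterClosed K) (hcl : IsClosed K)
    (hA : A ∈ K) (hB : B ∈ K) (hC : C ∈ K) (hD : D ∈ K) (h : InGeneralPosition A B C D)
    (h₁ : A + B ≠ C + D) (h₂ : A + C ≠ B + D) (h₃ : A + D ≠ B + C) : K = univ := by
  have h' := h
  simp only [InGeneralPosition, collinear_triple_iff_wedge] at h'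
  obtain ⟨hABC, hABD, hACD, hBCD⟩ := h'
  refine hK.eq_univ_of_affine_relation hcl hA hB hC hD h h₁ h₂ h₃ hBCD (neg_ne_zero.2 hACD) hABD
    (neg_ne_zero.2 hABC) ?_ (Prod.ext ?_ ?_)
  all_goals
    simp only [wedge, Prod.fst_sub, Prod.snd_sub, Prod.fst_add, Prod.snd_add, Prod.smul_fst,
      Prod.smul_snd, smul_eq_mul, Prod.fst_zero, Prod.snd_zero]
    ring

lemma IsInterClosed.eq_univ_or_isParallelogram (hK : IsInterClosed K)
    (hcl : IsClosed K) (hA : A ∈ K) (hB : B ∈ K) (hC : C ∈ K) (hD : D ∈ K)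
    (h : InGeneralPosition A B C D) : K = univ ∨ IsParallelogram A B C D ∨
      IsParallelogram A C B D ∨ IsParallelogram A B D C := by
  by_cases h₁ : A + B = C + D
  · exact Or.inr (Or.inr (Or.inl (h.swap_middle.isParallelogram h₁)))
  by_cases h₂ : A + C = B + D
  · exact Or.inr (Or.inl (h.isParallelogram h₂))
  by_cases h₃ : A + D = B + C
  · exact Or.inr (Or.inr (Or.inr (h.swap_right.isParallelogram h₃)))
  exact Or.inl (hK.eq_univ_of_inGeneralPosition hcl hA hB hC hD h h₁ h₂ h₃)

end InGeneralPosition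

/-- The vertices of the square `[-1, 1]²`, which serves as affine model of all parallelograms. -/
def squareVertices : Set (ℝ × ℝ) := {z | z.1 ^ 2 = 1 ∧ z.2 ^ 2 = 1}

lemma squareVertices_eq : squareVertices = {(-1, -1), (1, -1), (1, 1), (-1, 1)} := by
  ext ⟨x, y⟩
  simp only [squareVertices, mem_ofPred_eq, sq_eq_one_iff, mem_insert_iff, mem_singleton_iff,
    Prod.mk.injEq]
  tauto

section Parallelogram

variable {K : Set (ℝ × ℝ)} {A B C D E : ℝ × ℝ}

lemma IsParallelogram.exists_affineEquiv (h : IsParallelogram A B C D) :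
    ∃ e : (ℝ × ℝ) ≃ᵃ[ℝ] (ℝ × ℝ), e '' squareVertices = {A, B, C, D} ∧
      e '' insert 0 squareVertices = {A, B, C, D, midpoint ℝ A C} := by
  obtain ⟨hBC, -, hABD⟩ := h
  obtain rfl : C = B - A + D := eq_add_of_sub_eq hBC.symm
  rw [collinear_triple_iff_wedge] at hABD
  have hframe : wedge ((1 / 2 : ℝ) • (B - A)) ((1 / 2 : ℝ) • (D - A)) ≠ 0 := by
    rw [wedge_smul_left, wedge_smul_right]; positivity
  obtain ⟨e, he⟩ := exists_affineEquiv_of_wedge_ne_zero hframe (midpoint ℝ A (B - A + D))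
  have hm : midpoint ℝ A (B - A + D) = (1 / 2 : ℝ) • (B + D) := by
    rw [midpoint_eq_smul_add, invOf_eq_inv]; module
  have he₀ : e 0 = midpoint ℝ A (B - A + D) := by simp [he]
  have hvert : e '' squareVertices = {A, B, B - A + D, D} := by
    have h₁ : e (-1, -1) = A := by rw [he, hm]; module
    have h₂ : e (1, -1) = B := by rw [he, hm]; module
    have h₃ : e (1, 1) = B - A + D := by rw [he, hm]; module
    have h₄ : e (-1, 1) = D := by rw [he, hm]; module
    rw [squareVertices_eq, image_insert_eq, image_insert_eq, image_pair, h₁, h₂, h₃, h₄]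
  refine ⟨e, hvert, ?_⟩
  rw [image_insert_eq, hvert, he₀]
  ext; simp only [mem_insert_iff, mem_singleton_iff]; tauto

lemma side_or_diagonal_of_wedge_eq_zero {a b x : ℝ × ℝ} (ha : a ∈ insert 0 squareVertices)
    (hb : b ∈ insert 0 squareVertices) (hab : b - a ≠ 0) (hx : wedge (b - a) (x - a) = 0) :
    ((b - a).1 = 0 ∧ x.1 ^ 2 = 1) ∨ ((b - a).2 = 0 ∧ x.2 ^ 2 = 1) ∨
      ((b - a).1 = (b - a).2 ∧ x.1 = x.2) ∨ ((b - a).1 = -(b - a).2 ∧ x.1 = -x.2) := by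
  simp only [squareVertices, mem_insert_iff, mem_ofPred_eq, Prod.ext_iff, Prod.fst_zero,
    Prod.snd_zero] at ha hb
  simp only [ne_eq, wedge, Prod.ext_iff, Prod.fst_sub, Prod.snd_sub, Prod.fst_zero,
    Prod.snd_zero] at hab hx ⊢
  have hpair : (b.1 = a.1 ∧ a.1 ^ 2 = 1) ∨ (b.2 = a.2 ∧ a.2 ^ 2 = 1) ∨
      (a.1 = a.2 ∧ b.1 = b.2) ∨ (a.1 = -a.2 ∧ b.1 = -b.2) := by grind
  rcases hpair with ⟨h, h'⟩ | ⟨h, h'⟩ | ⟨h, h'⟩ | ⟨h, h'⟩ <;> grind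

lemma isInterClosed_insert_zero_squareVertices :
    IsInterClosed (insert 0 squareVertices) := by
  intro x hx
  obtain ⟨a, ha, b, hb, c, hc, d, hd, hne, hx, hx'⟩ := mem_interT_iff_wedge.1 hx
  have hab : b - a ≠ 0 := by intro hab; simp [hab, wedge] at hne
  have hcd : d - c ≠ 0 := by intro hcd; simp [hcd, wedge] at hne
  have h₁ := side_or_diagonal_of_wedge_eq_zero ha hb hab hx
  have h₂ := side_or_diagonal_of_wedge_eq_zero hc hd hcd hx'
  simp only [squareVertices, mem_insert_iff, mem_ofPred_eq, Prod.ext_iff, Prod.fst_zero,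
    Prod.snd_zero]
  simp only [wedge] at hne
  grind

lemma IsParallelogram.isInterClosed (h : IsParallelogram A B C D) :
    IsInterClosed {A, B, C, D, midpoint ℝ A C} := by
  obtain ⟨e, -, he⟩ := h.exists_affineEquiv
  rw [← he]
  simpa only [AffineEquiv.preimage_symm] using
    isInterClosed_insert_zero_squareVertices.preimage e.symm

-- `E` together with the vertex `(ε, δ)` and its two neighbours: the first three conditions on `E`
-- exclude collinear triples, the last three exclude parallelograms.
lemma IsInterClosed.eq_univ_of_squareVertices_subset_of_ne (hK : IsInterClosed K)
    (hcl : IsClosed K) (hsq : squareVertices ⊆ K) (hE : E ∈ K) {ε δ : ℝ} (hε : ε ^ 2 = 1)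
    (hδ : δ ^ 2 = 1) (h₁ : E.1 ≠ ε) (h₂ : E.2 ≠ δ) (h₁₂ : ε * E.1 + δ * E.2 ≠ 0)
    (hEε : E ≠ (3 * ε, -δ)) (hEδ : E ≠ (-ε, 3 * δ)) (hEεδ : E ≠ (-ε, -δ)) : K = univ := by
  refine hK.eq_univ_of_inGeneralPosition (A := (ε, δ)) (B := (-ε, δ)) (C := (ε, -δ)) hcl
    (hsq ⟨hε, hδ⟩) (hsq ⟨(neg_sq ε).trans hε, hδ⟩) (hsq ⟨hε, (neg_sq δ).trans hδ⟩) hE ?_ ?_ ?_ ?_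
  · simp only [InGeneralPosition, collinear_triple_iff_wedge, wedge, Prod.fst_sub, Prod.snd_sub]
    refine ⟨?_, ?_, ?_, ?_⟩ <;> grind
  all_goals
    simp only [ne_eq, Prod.ext_iff, Prod.fst_add, Prod.snd_add] at *
    grind

lemma IsInterClosed.eq_univ_of_squareVertices_subset (hK : IsInterClosed K) (hcl : IsClosed K)
    (hsq : squareVertices ⊆ K) (hE : E ∈ K) (hE' : E ∉ insert 0 squareVertices) : K = univ := by
  obtain ⟨x, y⟩ := E
  have key := fun ε δ => hK.eq_univ_of_squareVertices_subset_of_ne hcl hsq hE (ε := ε) (δ := δ)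
  simp only [squareVertices, mem_insert_iff, mem_ofPred_eq, Prod.mk_eq_zero, not_or] at hE'
  simp only [ne_eq, Prod.mk.injEq] at key
  obtain ⟨h0, hxy⟩ := hE'
  by_cases hx : x ^ 2 = 1
  · by_cases hy : y = 3
    · apply key (-x) (-1) <;> grind
    · apply key (-x) 1 <;> grind
  by_cases hy : y ^ 2 = 1
  · by_cases hx : x = 3
    · apply key (-1) (-y) <;> grind
    · apply key 1 (-y) <;> grind
  by_cases hsum : x + y = 0
  · apply key 1 (-1) <;> grind
  · apply key 1 1 <;> grind

lemma IsParallelogram.eq_univ_of_subset (h : IsParallelogram A B C D) (hK : IsInterClosed K)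
    (hcl : IsClosed K) (hABCD : {A, B, C, D} ⊆ K) (hE : E ∈ K)
    (hE' : E ∉ ({A, B, C, D, midpoint ℝ A C} : Set (ℝ × ℝ))) : K = univ := by
  obtain ⟨e, he, he'⟩ := h.exists_affineEquiv
  have hpre : e ⁻¹' K = univ := by
    refine (hK.preimage e).eq_univ_of_squareVertices_subset (E := e.symm E)
      (hcl.preimage e.continuous_of_finiteDimensional) ?_ (by simpa) ?_
    · rwa [← image_subset_iff, he]
    · intro hmem
      rw [← he'] at hE'
      exact hE' ⟨e.symm E, hmem, e.apply_symm_apply E⟩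
  exact e.surjective.preimage_injective (hpre.trans preimage_univ.symm)

end Parallelogram

section Existence

variable {S : Set (ℝ × ℝ)} {a b c d f : ℝ × ℝ}

lemma inGeneralPosition_of_notMem_line (hab : a ≠ b) (hcd : c ≠ d) (hc : c ∉ line a b)
    (hd : d ∉ line a b) (ha : a ∉ line c d) (hb : b ∉ line c d) : InGeneralPosition a b c d := by
  refine ⟨mt (collinear_triple_iff_mem_line hab).1 hc, mt (collinear_triple_iff_mem_line hab).1 hd,
    fun h => ?_, fun h => ?_⟩
  · rw [insert_comm, pair_comm] at h
    exact ha ((collinear_triple_iff_mem_line hcd).1 h)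
  · rw [insert_comm, pair_comm] at h
    exact hb ((collinear_triple_iff_mem_line hcd).1 h)

-- The line `df` contains at most one of the three points `a`, `b`, `c` of the line `ab`.
lemma exists_inGeneralPosition_of_mem_line (ha : a ∈ S) (hb : b ∈ S) (hc : c ∈ S) (hd : d ∈ S)
    (hf : f ∈ S) (hab : a ≠ b) (hac : a ≠ c) (hbc : b ≠ c) (hdf : d ≠ f) (hcab : c ∈ line a b)
    (hdab : d ∉ line a b) (hfab : f ∉ line a b) :
    ∃ A ∈ S, ∃ B ∈ S, ∃ C ∈ S, ∃ D ∈ S, InGeneralPosition A B C D := by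
  have haab : a ∈ line a b := left_mem_affineSpan_pair ℝ a b
  have hbab : b ∈ line a b := right_mem_affineSpan_pair ℝ a b
  have hunique : ∀ x ∈ line a b, ∀ y ∈ line a b, x ≠ y → x ∈ line d f → y ∉ line d f := by
    intro x hx y hy hxy hxdf hydf
    rw [← line_eq_of_mem hx hy hxy, line_eq_of_mem hxdf hydf hxy] at hdab
    exact hdab (left_mem_affineSpan_pair ℝ d f)
  by_cases hadf : a ∈ line d f
  · refine ⟨b, hb, c, hc, d, hd, f, hf, inGeneralPosition_of_notMem_line hbc hdf ?_ ?_
      (hunique a haab b hbab hab hadf) (hunique a haab c hcab hac hadf)⟩ <;>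
      rwa [line_eq_of_mem hbab hcab hbc]
  by_cases hbdf : b ∈ line d f
  · refine ⟨a, ha, c, hc, d, hd, f, hf, inGeneralPosition_of_notMem_line hac hdf ?_ ?_
      hadf (hunique b hbab c hcab hbc hbdf)⟩ <;>
      rwa [line_eq_of_mem haab hcab hac]
  · exact ⟨a, ha, b, hb, d, hd, f, hf,
      inGeneralPosition_of_notMem_line hab hdf hdab hfab hadf hbdf⟩

lemma exists_inGeneralPosition (hS : ∀ p, ¬ Collinear ℝ (S \ {p})) :
    ∃ A ∈ S, ∃ B ∈ S, ∃ C ∈ S, ∃ D ∈ S, InGeneralPosition A B C D := by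
  obtain ⟨a, ⟨ha, -⟩, -⟩ := exists_mem_notMem_line (hS 0) 0 0
  obtain ⟨b, ⟨hb, hba⟩, -⟩ := exists_mem_notMem_line (hS a) a a
  obtain ⟨c, ⟨hc, -⟩, hcab⟩ := exists_mem_notMem_line (hS a) a b
  obtain ⟨d, ⟨hd, hdc⟩, hdab⟩ := exists_mem_notMem_line (hS c) a b
  have hcd : c ≠ d := Ne.symm hdc
  have hab : a ≠ b := Ne.symm hba
  have of_mem_line : ∀ x ∈ S, ∀ y ∈ S, x ≠ y → c ∉ line x y → d ∉ line x y → x ∈ line c d →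
      ∃ A ∈ S, ∃ B ∈ S, ∃ C ∈ S, ∃ D ∈ S, InGeneralPosition A B C D := by
    intro x hx y hy hxy hcxy hdxy hxcd
    have hcx : c ≠ x := by rintro rfl; exact hcxy (left_mem_affineSpan_pair ℝ c y)
    have hdx : d ≠ x := by rintro rfl; exact hdxy (left_mem_affineSpan_pair ℝ d y)
    have hycd : y ∉ line c d := fun hycd =>
      hcxy (line_eq_of_mem hxcd hycd hxy ▸ left_mem_affineSpan_pair ℝ c d)
    obtain ⟨f, ⟨hf, hfy⟩, hfcd⟩ := exists_mem_notMem_line (hS y) c d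
    exact exists_inGeneralPosition_of_mem_line hc hd hx hy hf hcd hcx hdx (Ne.symm hfy) hxcd hycd
      hfcd
  by_cases hacd : a ∈ line c d
  · exact of_mem_line a ha b hb hab hcab hdab hacd
  by_cases hbcd : b ∈ line c d
  · rw [line, pair_comm] at hcab hdab
    exact of_mem_line b hb a ha hba hcab hdab hbcd
  exact ⟨a, ha, b, hb, c, hc, d, hd,
    inGeneralPosition_of_notMem_line hab hcd hcab hdab hacd hbcd⟩

end Existence

section NotDense

lemma isInterClosed_insert_affineSubspace (p : ℝ × ℝ) (L : AffineSubspace ℝ (ℝ × ℝ)) :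
    IsInterClosed (insert p (L : Set (ℝ × ℝ))) := by
  rintro x ⟨a, ha, b, hb, c, hc, d, hd, -, -, hne, hx, hx'⟩
  have hline : ∀ a ∈ insert p (L : Set (ℝ × ℝ)), ∀ b ∈ insert p (L : Set (ℝ × ℝ)),
      line a b ≤ L ∨ p ∈ line a b := by
    rintro a (rfl | ha) b (rfl | hb)
    · exact Or.inr (left_mem_affineSpan_pair ℝ _ _)
    · exact Or.inr (left_mem_affineSpan_pair ℝ a b)
    · exact Or.inr (right_mem_affineSpan_pair ℝ a b)
    · exact Or.inl (affineSpan_pair_le_of_mem_of_mem ha hb)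
  rcases hline a ha b hb with hL | hp
  · exact Or.inr (hL hx)
  rcases hline c hc d hd with hL | hp'
  · exact Or.inr (hL hx')
  by_contra hxp
  rw [mem_insert_iff, not_or] at hxp
  exact hne ((line_eq_of_mem hx hp hxp.1).symm.trans (line_eq_of_mem hx' hp' hxp.1))

lemma not_dense_insert_of_collinear {s : Set (ℝ × ℝ)} (hs : Collinear ℝ s) (p : ℝ × ℝ) :
    ¬ Dense (insert p (affineSpan ℝ s : Set (ℝ × ℝ))) := by
  intro h
  have hcl : IsClosed (affineSpan ℝ s : Set (ℝ × ℝ)) :=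
    (affineSpan ℝ s).closed_of_finiteDimensional
  have htop : (affineSpan ℝ s : Set (ℝ × ℝ)) = univ := by
    rw [← hcl.closure_eq]
    refine (Dense.mono ?_ (h.sdiff_singleton p)).closure_eq
    rintro x ⟨rfl | hx, hxp⟩
    exacts [absurd rfl hxp, hx]
  have : Collinear ℝ {((0, 0) : ℝ × ℝ), (1, 0), (0, 1)} :=
    (collinear_affineSpan_iff.2 hs).subset (htop ▸ subset_univ _)
  simp [collinear_triple_iff_wedge, wedge] at this

lemma not_dense_iUnion_of_collinear_sdiff_singleton {S : Set (ℝ × ℝ)} {p : ℝ × ℝ}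
    (h : Collinear ℝ (S \ {p})) : ¬ Dense (⋃ i, interT^[i] S) := by
  refine (isInterClosed_insert_affineSubspace p (affineSpan ℝ (S \ {p}))).not_dense_iUnion
    (not_dense_insert_of_collinear h p) ?_
  rw [← sdiff_singleton_subset_iff]
  exact subset_affineSpan ℝ _

lemma IsParallelogram.not_dense_iUnion {S : Set (ℝ × ℝ)} {A B C D : ℝ × ℝ}
    (h : IsParallelogram A B C D) (hS : S ⊆ {A, B, C, D, midpoint ℝ A C}) :
    ¬ Dense (⋃ i, interT^[i] S) :=
  h.isInterClosed.not_dense_iUnion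
    (fun hd => by simpa using (hd.sdiff_finite (toFinite {A, B, C, D, midpoint ℝ A C})).nonempty) hS

end NotDense

lemma IsInterClosed.eq_univ_or_exists_isParallelogram {K S : Set (ℝ × ℝ)} (hK : IsInterClosed K)
    (hcl : IsClosed K) (hSK : S ⊆ K) (hS : ∀ p, ¬ Collinear ℝ (S \ {p})) :
    K = univ ∨ ∃ A B C D, IsParallelogram A B C D ∧ {A, B, C, D} ⊆ S := by
  obtain ⟨A, hA, B, hB, C, hC, D, hD, h⟩ := exists_inGeneralPosition hS
  rcases hK.eq_univ_or_isParallelogram hcl (hSK hA) (hSK hB) (hSK hC) (hSK hD) h with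
    h | h | h | h
  · exact Or.inl h
  · exact Or.inr ⟨A, B, C, D, h, by simp [insert_subset_iff, *]⟩
  · exact Or.inr ⟨A, C, B, D, h, by simp [insert_subset_iff, *]⟩
  · exact Or.inr ⟨A, B, D, C, h, by simp [insert_subset_iff, *]⟩

lemma exists_collinear_sdiff_singleton_iff {k V P : Type*} [DivisionRing k] [AddCommGroup V]
    [Module k V] [AddTorsor V P] {s : Set P} :
    (∃ p, Collinear k (s \ {p})) ↔ s = ∅ ∨ Collinear k s ∨
      ∃ p ∈ s, Collinear k (s \ {p}) ∧ p ∉ affineSpan k (s \ {p}) := by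
  constructor
  · rintro ⟨p, hp⟩
    by_cases hps : p ∈ s
    · by_cases hspan : p ∈ affineSpan k (s \ {p})
      · refine Or.inr (Or.inl ?_)
        rwa [← collinear_insert_iff_of_mem_affineSpan hspan, insert_sdiff_singleton,
          insert_eq_of_mem hps] at hp
      · exact Or.inr (Or.inr ⟨p, hps, hp, hspan⟩)
    · exact Or.inr (Or.inl (sdiff_singleton_eq_self hps ▸ hp))
  · rintro (rfl | hs | ⟨p, -, hp, -⟩)
    · exact ⟨AddTorsor.nonempty.some, by simpa using collinear_empty k P⟩
    · exact ⟨AddTorsor.nonempty.some, hs.subset sdiff_subset⟩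
    · exact ⟨p, hp⟩

lemma exists_isParallelogram_subset_iff {S : Set (ℝ × ℝ)} :
    (∃ A B C D, IsParallelogram A B C D ∧ {A, B, C, D} ⊆ S ∧ S ⊆ {A, B, C, D, midpoint ℝ A C}) ↔
      (∃ A B C D : ℝ × ℝ, IsParallelogram A B C D ∧ S = {A, B, C, D}) ∨
        ∃ A B C D : ℝ × ℝ, IsParallelogram A B C D ∧ S = {A, B, C, D, midpoint ℝ A C} := by
  constructor
  · rintro ⟨A, B, C, D, h, hS, hS'⟩
    by_cases hm : midpoint ℝ A C ∈ S
    · refine Or.inr ⟨A, B, C, D, h, hS'.antisymm ?_⟩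
      rintro x (rfl | rfl | rfl | rfl | rfl)
      exacts [hS (by simp), hS (by simp), hS (by simp), hS (by simp), hm]
    · refine Or.inl ⟨A, B, C, D, h, Subset.antisymm (fun x hx => ?_) hS⟩
      rcases hS' hx with rfl | rfl | rfl | rfl | rfl
      exacts [by simp, by simp, by simp, by simp, absurd hx hm]
  · rintro (⟨A, B, C, D, h, rfl⟩ | ⟨A, B, C, D, h, rfl⟩)
    · exact ⟨A, B, C, D, h, Subset.rfl, by grind⟩
    · exact ⟨A, B, C, D, h, by grind, Subset.rfl⟩

theorem dense_iff_not_exceptional_general (S : Set (ℝ × ℝ)) :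
    Dense (⋃ i, interT^[i] S) ↔
      ¬ (S = ∅ ∨
         Collinear ℝ S ∨
         (∃ p ∈ S, Collinear ℝ (S \ {p}) ∧ p ∉ affineSpan ℝ (S \ {p})) ∨
         (∃ A B C D : ℝ × ℝ, IsParallelogram A B C D ∧ S = {A, B, C, D}) ∨
         (∃ A B C D : ℝ × ℝ, IsParallelogram A B C D ∧ S = {A, B, C, D, midpoint ℝ A C})) := by
  rw [← exists_isParallelogram_subset_iff, ← or_assoc, ← or_assoc, or_assoc (a := S = ∅),
    ← exists_collinear_sdiff_singleton_iff]
  constructor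
  · rintro hd (⟨p, hp⟩ | ⟨A, B, C, D, h, -, hS⟩)
    · exact not_dense_iUnion_of_collinear_sdiff_singleton hp hd
    · exact h.not_dense_iUnion hS hd
  · intro h
    push Not at h
    obtain ⟨hp, hpar⟩ := h
    have hcol : ¬ Collinear ℝ S := fun hS => hp 0 (hS.subset sdiff_subset)
    have hK := isInterClosed_closure (isInterClosed_iUnion hcol)
    have hSK : S ⊆ closure (⋃ i, interT^[i] S) :=
      (subset_iUnion (fun i => interT^[i] S) 0).trans subset_closure
    rw [dense_iff_closure_eq]
    obtain hu | ⟨A, B, C, D, h, hABCD⟩ :=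
      hK.eq_univ_or_exists_isParallelogram isClosed_closure hSK hp
    · exact hu
    · obtain ⟨E, hE, hE'⟩ := not_subset.1 (hpar A B C D h hABCD)
      exact h.eq_univ_of_subset hK isClosed_closure (hABCD.trans hSK) (hSK hE) hE'

/-- For a finite `S ⊆ ℝ²`, the union `⋃ i, Tⁱ(S)` is dense in the plane iff `S` is not
(1) empty, (2) collinear, (3) a collinear set plus one point off its line,
(4) the vertices of a nondegenerate parallelogram, or (5) such vertices together with
the intersection of the diagonals. -/
theorem dense_iff_not_exceptional (S : Set (ℝ × ℝ)) (hS : S.Finite) :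
    Dense (⋃ i, interT^[i] S) ↔
      ¬ (S = ∅ ∨
         Collinear ℝ S ∨
         (∃ p ∈ S, Collinear ℝ (S \ {p}) ∧ p ∉ affineSpan ℝ (S \ {p})) ∨
         (∃ A B C D : ℝ × ℝ, IsParallelogram A B C D ∧ S = {A, B, C, D}) ∨
         (∃ A B C D : ℝ × ℝ, IsParallelogram A B C D ∧
            S = {A, B, C, D, midpoint ℝ A C})) :=
  dense_iff_not_exceptional_general S
end
end

section
/- Let S be a finite set of points in ℝ² with T(S) = S. Then S is one of the following: (1) the empty set; (2) a set of collinear points together with one additional point not on their common line; (3) the four vertices of a nondegenerate parallelogram together with the intersection point of its two diagonals. -/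
open Set Filter

noncomputable section

/-!
Suppose the closed finite set `S` contains nested segments: points `X`, `P`, `M` not on a line, `Q`
strictly between `X` and `P`, and `N` strictly between `X` and `M`. The crossing point of `PN` and
`QM` projects from `X` to points of `S` on `PM` and on `QN`, which form nested segments with `X`,
`Q`, `P` again, but strictly closer to the line `XP`. This contradicts finiteness.

Hence no point of `S` is interior to a triangle of points of `S`, and a convex quadrilateral in `S`
has parallel opposite sides, as otherwise two of them extend to nested segments. Any four points of
`S` in general position are therefore the vertices of a parallelogram. Comparing further points with
this parallelogram leaves only its center, while a set without four points in general position is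
collinear or a near-pencil.
-/


section Lines

variable {k V : Type*} [Field k] [AddCommGroup V] [Module k V] {A B C E : V} {α β : k}

lemma lineMap_div_add_eq_iff (hαβ : α + β ≠ 0) :
    AffineMap.lineMap A B (β / (α + β)) = E ↔ (α + β) • E = α • A + β • B := by
  have hsmul : (α + β) • AffineMap.lineMap A B (β / (α + β)) = α • A + β • B := by
    rw [AffineMap.lineMap_apply_module]
    match_scalars <;> field_simp
    ring
  rw [← hsmul, (smul_right_injective V hαβ).eq_iff, eq_comm]

lemma mem_line_of_smul_eq (hαβ : α + β ≠ 0) (hE : (α + β) • E = α • A + β • B) :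
    E ∈ line[k, A, B] := by
  rw [← (lineMap_div_add_eq_iff hαβ).2 hE]
  exact AffineMap.lineMap_mem_affineSpan_pair _ _ _

lemma notMem_line_of_not_collinear (h : ¬ Collinear k {A, B, C}) : C ∉ line[k, A, B] := by
  intro hC
  have hCAB := collinear_insert_of_mem_affineSpan_pair hC
  rw [insert_comm, pair_comm C B] at hCAB
  exact h hCAB

lemma sbtw_of_smul_eq [LinearOrder k] [IsStrictOrderedRing k] (hα : 0 < α) (hβ : 0 < β)
    (hEB : E ≠ B) (hE : (α + β) • E = α • A + β • B) : Sbtw k A E B := by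
  have hαβ : α + β ≠ 0 := by positivity
  have hAB : A ≠ B := by
    rintro rfl
    rw [← add_smul] at hE
    exact hEB (smul_right_injective V hαβ hE)
  rw [← (lineMap_div_add_eq_iff hαβ).2 hE, sbtw_lineMap_iff]
  exact ⟨hAB, by positivity, by rw [div_lt_one] <;> linarith⟩

end Lines

section GeneralPosition

variable {k V : Type*} [Field k] [AddCommGroup V] [Module k V] {A B C D : V} {S : Set V}

variable (k) in
/-- Four points are in general position if no three of them are collinear. Nothing is said about
coplanarity, so the vertices of a tetrahedron qualify. -/
def GeneralPosition (A B C D : V) : Prop :=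
  ¬ Collinear k {A, B, C} ∧ ¬ Collinear k {A, B, D} ∧
    ¬ Collinear k {A, C, D} ∧ ¬ Collinear k {B, C, D}

namespace GeneralPosition

lemma swap_left (h : GeneralPosition k A B C D) : GeneralPosition k B A C D :=
  ⟨insert_comm A B _ ▸ h.1, insert_comm A B _ ▸ h.2.1, h.2.2.2, h.2.2.1⟩

lemma swap_middle (h : GeneralPosition k A B C D) : GeneralPosition k A C B D :=
  ⟨pair_comm B C ▸ h.1, h.2.2.1, h.2.1, insert_comm B C _ ▸ h.2.2.2⟩

lemma swap_right (h : GeneralPosition k A B C D) : GeneralPosition k A B D C :=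
  ⟨h.2.1, h.1, pair_comm C D ▸ h.2.2.1, pair_comm C D ▸ h.2.2.2⟩

lemma rotate (h : GeneralPosition k A B C D) : GeneralPosition k B C D A :=
  h.swap_left.swap_middle.swap_right

end GeneralPosition

lemma generalPosition_of_notMem_line (hAB : A ≠ B) (hCD : C ≠ D) (hA : A ∉ line[k, C, D])
    (hB : B ∉ line[k, C, D]) (hC : C ∉ line[k, A, B]) (hD : D ∉ line[k, A, B]) :
    GeneralPosition k A B C D := by
  refine ⟨fun h => hC ?_, fun h => hD ?_, fun h => hA ?_, fun h => hB ?_⟩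
  all_goals exact h.mem_affineSpan_of_mem_of_ne (by simp) (by simp) (by simp) ‹_›

variable (k) in
/-- A near-pencil: a collinear set together with one point off its line. -/
def IsNearPencil (S : Set V) : Prop :=
  ∃ p ∈ S, Collinear k (S \ {p}) ∧ p ∉ affineSpan k (S \ {p})

lemma exists_ne_notMem_line (hcol : ¬ Collinear k S) (hpencil : ¬ IsNearPencil k S) (A B : V) :
    ∃ p ∈ S, ∃ q ∈ S, p ≠ q ∧ p ∉ line[k, A, B] ∧ q ∉ line[k, A, B] := by
  have hline : Collinear k (line[k, A, B] : Set V) := by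
    rw [Collinear, ← direction_affineSpan, AffineSubspace.affineSpan_coe, direction_affineSpan]
    exact collinear_pair k A B
  obtain ⟨p, hp, hpAB⟩ : ∃ p ∈ S, p ∉ line[k, A, B] := by
    by_contra! h
    exact hcol (hline.subset h)
  by_contra! h
  have hsub : S \ {p} ⊆ line[k, A, B] := fun q hq => h p hp q hq.1 (Ne.symm hq.2) hpAB
  exact hpencil ⟨p, hp, hline.subset hsub, fun hmem => hpAB (affineSpan_le.2 hsub hmem)⟩

/-- Two points off the line carry a second line, which contains at most one of `A`, `B`, `C`. -/
lemma exists_generalPosition_of_three_on_line (hcol : ¬ Collinear k S)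
    (hpencil : ¬ IsNearPencil k S) (hA : A ∈ S) (hB : B ∈ S) (hC : C ∈ S) (hAB : A ≠ B)
    (hAC : A ≠ C) (hBC : B ≠ C) (hCAB : C ∈ line[k, A, B]) :
    ∃ a ∈ S, ∃ b ∈ S, ∃ c ∈ S, ∃ d ∈ S, GeneralPosition k a b c d := by
  obtain ⟨p, hp, q, hq, hpq, hpAB, hqAB⟩ := exists_ne_notMem_line hcol hpencil A B
  have hAAB : A ∈ line[k, A, B] := left_mem_affineSpan_pair k A B
  have hBAB : B ∈ line[k, A, B] := right_mem_affineSpan_pair k A B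
  have of_two_off : ∀ u ∈ S, ∀ v ∈ S, u ≠ v → u ∈ line[k, A, B] → v ∈ line[k, A, B] →
      u ∉ line[k, p, q] → v ∉ line[k, p, q] →
      ∃ a ∈ S, ∃ b ∈ S, ∃ c ∈ S, ∃ d ∈ S, GeneralPosition k a b c d := by
    intro u hu v hv huv huAB hvAB hupq hvpq
    have huvAB := affineSpan_pair_eq_of_mem_of_mem_of_ne huAB hvAB huv
    exact ⟨u, hu, v, hv, p, hp, q, hq,
      generalPosition_of_notMem_line huv hpq hupq hvpq (huvAB ▸ hpAB) (huvAB ▸ hqAB)⟩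
  have notMem_of_mem : ∀ u v, u ≠ v → u ∈ line[k, A, B] → v ∈ line[k, A, B] →
      u ∈ line[k, p, q] → v ∉ line[k, p, q] := by
    intro u v huv huAB hvAB hupq hvpq
    apply hpAB
    rw [← affineSpan_pair_eq_of_mem_of_mem_of_ne huAB hvAB huv,
      affineSpan_pair_eq_of_mem_of_mem_of_ne hupq hvpq huv]
    exact left_mem_affineSpan_pair k p q
  by_cases hApq : A ∈ line[k, p, q]
  · exact of_two_off B hB C hC hBC hBAB hCAB (notMem_of_mem A B hAB hAAB hBAB hApq)
      (notMem_of_mem A C hAC hAAB hCAB hApq)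
  · by_cases hBpq : B ∈ line[k, p, q]
    · exact of_two_off A hA C hC hAC hAAB hCAB hApq (notMem_of_mem B C hBC hBAB hCAB hBpq)
    · exact of_two_off A hA B hB hAB hAAB hBAB hApq hBpq

lemma exists_generalPosition (hcol : ¬ Collinear k S) (hpencil : ¬ IsNearPencil k S) :
    ∃ a ∈ S, ∃ b ∈ S, ∃ c ∈ S, ∃ d ∈ S, GeneralPosition k a b c d := by
  obtain ⟨a, ha, b, hb, hab⟩ : S.Nontrivial := by
    by_contra h
    rcases (not_nontrivial_iff.1 h).eq_empty_or_singleton with rfl | ⟨p, rfl⟩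
    exacts [hcol (collinear_empty k V), hcol (collinear_singleton k p)]
  obtain ⟨p, hp, q, hq, hpq, hpab, hqab⟩ := exists_ne_notMem_line hcol hpencil a b
  have haab : a ∈ line[k, a, b] := left_mem_affineSpan_pair k a b
  have hbab : b ∈ line[k, a, b] := right_mem_affineSpan_pair k a b
  by_cases hapq : a ∈ line[k, p, q]
  · exact exists_generalPosition_of_three_on_line hcol hpencil hp hq ha hpq
      (ne_of_mem_of_not_mem haab hpab).symm (ne_of_mem_of_not_mem haab hqab).symm hapq
  by_cases hbpq : b ∈ line[k, p, q]
  · exact exists_generalPosition_of_three_on_line hcol hpencil hp hq hb hpq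
      (ne_of_mem_of_not_mem hbab hpab).symm (ne_of_mem_of_not_mem hbab hqab).symm hbpq
  exact ⟨a, ha, b, hb, p, hp, q, hq,
    generalPosition_of_notMem_line hab hpq hapq hbpq hpab hqab⟩

end GeneralPosition

section Closed

variable {k V W : Type*} [Field k] [AddCommGroup V] [Module k V] [AddCommGroup W] [Module k W]
  {S : Set V} {A B C D E : V}

variable (k) in
/-- `S` contains every intersection point of two distinct lines spanned by points of `S`.
Degenerate lines `line[k, a, a] = {a}` are allowed: they only produce points of `S`. -/
def IntersectionClosed (S : Set V) : Prop :=
  ∀ ⦃a⦄, a ∈ S → ∀ ⦃b⦄, b ∈ S → ∀ ⦃c⦄, c ∈ S → ∀ ⦃d⦄, d ∈ S →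
    line[k, a, b] ≠ line[k, c, d] → ∀ ⦃x⦄, x ∈ line[k, a, b] → x ∈ line[k, c, d] → x ∈ S

namespace IntersectionClosed

lemma mem_of_mem_lines (hcl : IntersectionClosed k S) (hA : A ∈ S) (hB : B ∈ S) (hC : C ∈ S)
    (hD : D ∈ S) (hABC : ¬ Collinear k {A, B, C}) (hAB : E ∈ line[k, A, B])
    (hCD : E ∈ line[k, C, D]) : E ∈ S := by
  refine hcl hA hB hC hD (fun h => notMem_line_of_not_collinear hABC ?_) hAB hCD
  exact h ▸ left_mem_affineSpan_pair k C D

lemma preimage (hcl : IntersectionClosed k S) {φ : W →ᵃ[k] V} (hφ : Function.Injective φ) :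
    IntersectionClosed k (φ ⁻¹' S) := by
  have map_line (a b : W) : line[k, φ a, φ b] = line[k, a, b].map φ := by
    rw [AffineSubspace.map_span, image_pair]
  have mem_line {x a b : W} : φ x ∈ line[k, φ a, φ b] ↔ x ∈ line[k, a, b] := by
    rw [map_line, AffineSubspace.mem_map_iff_mem_of_injective hφ]
  intro a ha b hb c hc d hd hne x hxab hxcd
  refine hcl ha hb hc hd (fun heq => hne ?_) (mem_line.2 hxab) (mem_line.2 hxcd)
  ext y
  rw [← mem_line, heq, mem_line]

end IntersectionClosed

end Closed

section Frame

variable {k V : Type*} [Field k] [AddCommGroup V] [Module k V] {A B C D : V} {S : Set V}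

variable (k) in
/-- The affine coordinate system sending `(0, 0)`, `(1, 0)`, `(0, 1)` to `A`, `B`, `C`. -/
def frame (A B C : V) : k × k →ᵃ[k] V :=
  ((LinearMap.toSpanSingleton k V (B - A)).coprod
    (LinearMap.toSpanSingleton k V (C - A))).toAffineMap + AffineMap.const k (k × k) A

lemma frame_apply (A B C : V) (x : k × k) :
    frame k A B C x = x.1 • (B - A) + x.2 • (C - A) + A := rfl

lemma linearIndependent_of_not_collinear (h : ¬ Collinear k {A, B, C}) :
    LinearIndependent k ![B - A, C - A] := by
  rw [LinearIndependent.pair_iff' (sub_ne_zero.2 (ne₁₂_of_not_collinear h).symm)]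
  intro a ha
  apply notMem_line_of_not_collinear h
  rw [mem_affineSpan_pair_iff_exists_lineMap_eq]
  exact ⟨a, by rw [AffineMap.lineMap_apply, vsub_eq_sub, ha, vadd_eq_add, sub_add_cancel]⟩

lemma frame_injective (h : ¬ Collinear k {A, B, C}) : Function.Injective (frame k A B C) := by
  intro x y hxy
  have hzero : (x.1 - y.1) • (B - A) + (x.2 - y.2) • (C - A) = 0 := by
    rw [frame_apply, frame_apply, add_left_inj, ← sub_eq_zero] at hxy
    rw [← hxy]
    module
  obtain ⟨h₁, h₂⟩ :=
    LinearIndependent.pair_iff.1 (linearIndependent_of_not_collinear h) _ _ hzero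
  exact Prod.ext (sub_eq_zero.1 h₁) (sub_eq_zero.1 h₂)

lemma exists_frame_eq (hS : Coplanar k S) (hA : A ∈ S) (hB : B ∈ S) (hC : C ∈ S)
    (h : ¬ Collinear k {A, B, C}) {p : V} (hp : p ∈ S) : ∃ x, frame k A B C x = p := by
  have := hS.finiteDimensional_vectorSpan
  have hle : Submodule.span k (range ![B - A, C - A]) ≤ vectorSpan k S := by
    rw [Submodule.span_le, Matrix.range_cons_cons_empty]
    rintro v (rfl | rfl)
    exacts [vsub_mem_vectorSpan k hB hA, vsub_mem_vectorSpan k hC hA]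
  have hspan : Submodule.span k (range ![B - A, C - A]) = vectorSpan k S := by
    apply Submodule.eq_of_le_of_finrank_le hle
    rw [finrank_span_eq_card (linearIndependent_of_not_collinear h)]
    simpa using hS.finrank_le_two
  have hpA : p - A ∈ Submodule.span k (range ![B - A, C - A]) :=
    hspan ▸ vsub_mem_vectorSpan k hp hA
  rw [Matrix.range_cons_cons_empty, Submodule.mem_span_pair] at hpA
  obtain ⟨x, y, hxy⟩ := hpA
  exact ⟨(x, y), by rw [frame_apply, hxy, sub_add_cancel]⟩

lemma exists_smul_add_smul_add_smul_eq (hS : Coplanar k S) (hA : A ∈ S) (hB : B ∈ S)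
    (hC : C ∈ S) (hD : D ∈ S) (h : GeneralPosition k A B C D) :
    ∃ α β γ : k, α ≠ 0 ∧ β ≠ 0 ∧ γ ≠ 0 ∧ α + β + γ = 1 ∧ α • A + β • B + γ • C = D := by
  obtain ⟨⟨β, γ⟩, hβγ⟩ := exists_frame_eq hS hA hB hC h.1 hD
  have hD_eq : (1 - β - γ) • A + β • B + γ • C = D := by
    rw [← hβγ, frame_apply]
    module
  refine ⟨1 - β - γ, β, γ, fun hα => ?_, ?_, ?_, by ring, hD_eq⟩
  · have hβγ_one : β + γ = 1 := by linear_combination -hα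
    apply notMem_line_of_not_collinear h.2.2.2
    apply mem_line_of_smul_eq (α := β) (β := γ) (by simp [hβγ_one])
    rw [hβγ_one, one_smul, ← hD_eq, hα, zero_smul, zero_add]
  · rintro rfl
    apply notMem_line_of_not_collinear h.2.2.1
    apply mem_line_of_smul_eq (α := 1 - γ) (β := γ) (by simp)
    rw [sub_add_cancel, one_smul, ← hD_eq, zero_smul, add_zero, sub_zero]
  · rintro rfl
    apply notMem_line_of_not_collinear h.2.1
    apply mem_line_of_smul_eq (α := 1 - β) (β := β) (by simp)
    rw [sub_add_cancel, one_smul, ← hD_eq, zero_smul, add_zero, sub_zero]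

end Frame

section Coordinates

variable {k : Type*} [Field k] {S : Set (k × k)} {a b c d x : k × k}

lemma mem_line_iff (hab : a ≠ b) :
    x ∈ line[k, a, b] ↔ (b.1 - a.1) * (x.2 - a.2) = (b.2 - a.2) * (x.1 - a.1) := by
  rw [mem_affineSpan_pair_iff_exists_lineMap_eq]
  constructor
  · rintro ⟨r, rfl⟩
    simp only [AffineMap.lineMap_apply, vsub_eq_sub, vadd_eq_add, Prod.fst_add, Prod.snd_add,
      Prod.smul_fst, Prod.smul_snd, Prod.fst_sub, Prod.snd_sub, smul_eq_mul]
    ring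
  · intro h
    by_cases h₁ : b.1 - a.1 = 0
    · have h₂ : b.2 - a.2 ≠ 0 := fun h₂ =>
        hab (Prod.ext (sub_eq_zero.1 h₁).symm (sub_eq_zero.1 h₂).symm)
      refine ⟨(x.2 - a.2) / (b.2 - a.2), Prod.ext ?_ ?_⟩ <;>
        simp only [AffineMap.lineMap_apply, vsub_eq_sub, vadd_eq_add, Prod.fst_add, Prod.snd_add,
          Prod.smul_fst, Prod.smul_snd, Prod.fst_sub, Prod.snd_sub, smul_eq_mul] <;>
        grind
    · refine ⟨(x.1 - a.1) / (b.1 - a.1), Prod.ext ?_ ?_⟩ <;>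
        simp only [AffineMap.lineMap_apply, vsub_eq_sub, vadd_eq_add, Prod.fst_add, Prod.snd_add,
          Prod.smul_fst, Prod.smul_snd, Prod.fst_sub, Prod.snd_sub, smul_eq_mul] <;>
        grind

lemma not_collinear_of_det_ne (h : (b.1 - a.1) * (c.2 - a.2) ≠ (b.2 - a.2) * (c.1 - a.1)) :
    ¬ Collinear k {a, b, c} := by
  have hab : a ≠ b := by
    rintro rfl
    simp at h
  intro hcol
  exact h ((mem_line_iff hab).1
    (hcol.mem_affineSpan_of_mem_of_ne (by simp) (by simp) (by simp) hab))

namespace IntersectionClosed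

lemma mem_of_det_ne (hcl : IntersectionClosed k S) (ha : a ∈ S) (hb : b ∈ S) (hc : c ∈ S)
    (hd : d ∈ S) (hdet : (b.1 - a.1) * (d.2 - c.2) ≠ (b.2 - a.2) * (d.1 - c.1))
    (hab : (b.1 - a.1) * (x.2 - a.2) = (b.2 - a.2) * (x.1 - a.1))
    (hcd : (d.1 - c.1) * (x.2 - c.2) = (d.2 - c.2) * (x.1 - c.1)) : x ∈ S := by
  have hne_ab : a ≠ b := by
    rintro rfl
    simp at hdet
  have hne_cd : c ≠ d := by
    rintro rfl
    simp at hdet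
  refine hcl ha hb hc hd (fun heq => hdet ?_) ((mem_line_iff hne_ab).2 hab)
    ((mem_line_iff hne_cd).2 hcd)
  have hc' := (mem_line_iff hne_ab).1 (heq ▸ left_mem_affineSpan_pair k c d)
  have hd' := (mem_line_iff hne_ab).1 (heq ▸ right_mem_affineSpan_pair k c d)
  linear_combination hd' - hc'

lemma preimage_swap (hcl : IntersectionClosed k S) :
    IntersectionClosed k (Prod.swap ⁻¹' S) :=
  hcl.preimage (φ := (LinearEquiv.prodComm k k k).toLinearMap.toAffineMap) Prod.swap_injective

variable [LinearOrder k] [IsStrictOrderedRing k]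

lemma radial_projection_mem (hcl : IntersectionClosed k S) {p q u v : k} (hp : 0 < p)
    (hq : 0 < q) (hu : 0 < u) (hv : 0 < v) (h₀ : (0, 0) ∈ S) (hpS : (p, 0) ∈ S)
    (hqS : (0, q) ∈ S) (huv : (u, v) ∈ S) :
    (p * q / (u * q + v * p) * u, p * q / (u * q + v * p) * v) ∈ S := by
  refine hcl.mem_of_det_ne h₀ huv hpS hqS (fun h => ?_) ?_ ?_
  · linarith [mul_pos hu hq, mul_pos hv hp]
  · ring
  · field_simp
    ring

/-- The segments from `(1, 0)` to `(0, t)` and from `(s, 0)` to `(0, 1)` cross in a point of `S`,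
which projects radially onto the sides joining `(1, 0)` to `(0, 1)` and `(s, 0)` to `(0, t)`. -/
lemma exists_lower_nested (hcl : IntersectionClosed k S) {s t : k} (hs : s ∈ Ioo 0 1)
    (ht : t ∈ Ioo 0 1) (h₀ : (0, 0) ∈ S) (h₁ : (1, 0) ∈ S) (h_s : (s, 0) ∈ S)
    (h₂ : (0, 1) ∈ S) (h_t : (0, t) ∈ S) :
    ∃ x y r : k, y ∈ Ioo 0 1 ∧ r ∈ Ioo 0 1 ∧ (x, y) ∈ S ∧ (r * x, r * y) ∈ S := by
  obtain ⟨hs₀, hs₁⟩ := hs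
  obtain ⟨ht₀, ht₁⟩ := ht
  obtain ⟨u, v, hu, hv, huv⟩ : ∃ u v, 0 < u ∧ 0 < v ∧ (u, v) ∈ S := by
    have hst : 0 < 1 - s * t := sub_pos.2 (mul_lt_one_of_nonneg_of_lt_one_left hs₀.le hs₁ ht₁.le)
    have hst_ne : 1 - s * t ≠ 0 := hst.ne'
    refine ⟨s * (1 - t) / (1 - s * t), t * (1 - s) / (1 - s * t),
      div_pos (mul_pos hs₀ (sub_pos.2 ht₁)) hst, div_pos (mul_pos ht₀ (sub_pos.2 hs₁)) hst,
      hcl.mem_of_det_ne h₁ h_t h_s h₂ (fun h => ?_) ?_ ?_⟩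
    · linarith
    · grind
    · grind
  have houter := hcl.radial_projection_mem one_pos one_pos hu hv h₀ h₁ h₂ huv
  have hinner := hcl.radial_projection_mem hs₀ ht₀ hu hv h₀ h_s h_t huv
  refine ⟨_, _, s * t * (u + v) / (u * t + v * s), ⟨by positivity, ?_⟩, ⟨by positivity, ?_⟩,
    houter, ?_⟩
  · rw [mul_one, mul_one, mul_one, div_mul_eq_mul_div, one_mul, div_lt_one] <;> linarith
  · rw [div_lt_one (by positivity)]
    linarith [mul_lt_mul_of_pos_right hs₁ (mul_pos ht₀ hu),
      mul_lt_mul_of_pos_right ht₁ (mul_pos hs₀ hv)]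
  · convert hinner using 2 <;> field_simp

/-- Among the outer points of the nested configurations with apex `(0, 0)` over the first axis,
the one nearest to that axis is not nearest, by `exists_lower_nested`. -/
lemma not_nested_of_finite (hcl : IntersectionClosed k S) (hfin : S.Finite) {s t : k}
    (hs : s ∈ Ioo 0 1) (ht : t ∈ Ioo 0 1) (h₀ : (0, 0) ∈ S) (h₁ : (1, 0) ∈ S) (h_s : (s, 0) ∈ S)
    (h₂ : (0, 1) ∈ S) (h_t : (0, t) ∈ S) : False := by
  let outer : Set (k × k) := {m | m ∈ S ∧ 0 < m.2 ∧ ∃ r ∈ Ioo (0 : k) 1, r • m ∈ S}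
  have hne : outer.Nonempty := ⟨(0, 1), h₂, one_pos, t, ht, by simpa using h_t⟩
  obtain ⟨m, ⟨hm, hm_pos, r, hr, hrm⟩, hmin⟩ :=
    exists_min_image outer Prod.snd (hfin.subset fun m hm => hm.1) hne
  have hind : ¬ Collinear k {((0 : k), (0 : k)), (1, 0), m} :=
    not_collinear_of_det_ne (by simpa using hm_pos.ne')
  set φ := frame k ((0 : k), (0 : k)) (1, 0) m with hφ
  have hφ_apply (x y : k) : φ (x, y) = (x + y * m.1, y * m.2) := by
    ext <;> simp [hφ, frame_apply]
  obtain ⟨x, y, q, hy, hq, hxy, hqxy⟩ :=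
    (hcl.preimage (frame_injective hind)).exists_lower_nested hs hr
      (by simpa [← hφ, hφ_apply] using h₀) (by simpa [← hφ, hφ_apply] using h₁)
      (by simpa [← hφ, hφ_apply] using h_s) (by simpa [← hφ, hφ_apply] using hm)
      (by simpa [← hφ, hφ_apply, Prod.smul_def] using hrm)
  rw [mem_preimage, ← hφ, hφ_apply] at hxy hqxy
  have hlower : (x + y * m.1, y * m.2) ∈ outer := by
    refine ⟨hxy, mul_pos hy.1 hm_pos, q, hq, ?_⟩
    convert hqxy using 1
    ext <;> simp <;> ring
  exact (hmin _ hlower).not_gt (mul_lt_of_lt_one_left hm_pos hy.2)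

end IntersectionClosed

end Coordinates

section ConvexPosition

variable {k V : Type*} [Field k] [LinearOrder k] [IsStrictOrderedRing k] [AddCommGroup V]
  [Module k V] {S : Set V} {A B C D X P Q M N : V} {α β γ δ : k}

namespace IntersectionClosed

lemma not_sbtw_of_sbtw (hcl : IntersectionClosed k S) (hfin : S.Finite) (hX : X ∈ S) (hP : P ∈ S)
    (hQ : Q ∈ S) (hM : M ∈ S) (hN : N ∈ S) (hXPM : ¬ Collinear k {X, P, M})
    (hXQP : Sbtw k X Q P) : ¬ Sbtw k X N M := by
  intro hXNM
  obtain ⟨⟨s, hs, rfl⟩, -⟩ := sbtw_iff_mem_image_Ioo_and_ne.1 hXQP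
  obtain ⟨⟨t, ht, rfl⟩, -⟩ := sbtw_iff_mem_image_Ioo_and_ne.1 hXNM
  have hinj := frame_injective hXPM
  refine (hcl.preimage hinj).not_nested_of_finite (hfin.preimage hinj.injOn) hs ht ?_ ?_ ?_ ?_ ?_
  all_goals simpa [frame_apply, AffineMap.lineMap_apply] using ‹_›

lemma exists_mem_sbtw_of_interior (hcl : IntersectionClosed k S) (hA : A ∈ S) (hB : B ∈ S)
    (hC : C ∈ S) (hD : D ∈ S) (hABC : ¬ Collinear k {A, B, C}) (hα : 0 < α) (hβ : 0 < β)
    (hABCD : (α + β + γ) • D = α • A + β • B + γ • C) : ∃ E ∈ S, Sbtw k A E B := by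
  have hαβ : 0 < α + β := add_pos hα hβ
  set E := AffineMap.lineMap A B (β / (α + β)) with hE_def
  have hE : (α + β) • E = α • A + β • B := (lineMap_div_add_eq_iff hαβ.ne').1 hE_def.symm
  have hECD : E ∈ line[k, C, D] := by
    apply mem_line_of_smul_eq (α := -γ) (β := α + β + γ) (by simpa using hαβ.ne')
    rw [hABCD, neg_add_cancel_comm_assoc, hE]
    module
  have hEAB : E ∈ line[k, A, B] := AffineMap.lineMap_mem_affineSpan_pair _ _ _
  refine ⟨E, hcl.mem_of_mem_lines hA hB hC hD hABC hEAB hECD,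
    sbtw_lineMap_iff.2 ⟨ne₁₂_of_not_collinear hABC, by positivity, ?_⟩⟩
  rw [div_lt_one hαβ]
  linarith

/-- The lines `CD` and `BD` cut the sides `AB` and `AC`, which is a nested configuration at `A`. -/
lemma notMem_of_interior (hcl : IntersectionClosed k S) (hfin : S.Finite) (hA : A ∈ S)
    (hB : B ∈ S) (hC : C ∈ S) (hABC : ¬ Collinear k {A, B, C}) (hα : 0 < α) (hβ : 0 < β)
    (hγ : 0 < γ) (hABCD : (α + β + γ) • D = α • A + β • B + γ • C) : D ∉ S := by
  intro hD
  obtain ⟨E, hE, hAEB⟩ := hcl.exists_mem_sbtw_of_interior hA hB hC hD hABC hα hβ hABCD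
  obtain ⟨F, hF, hAFC⟩ := hcl.exists_mem_sbtw_of_interior (γ := β) hA hC hB hD
    (pair_comm B C ▸ hABC) hα hγ (by rw [add_right_comm, hABCD]; abel)
  exact hcl.not_sbtw_of_sbtw hfin hA hB hE hC hF hABC hAEB hAFC

/-- If `α > β`, the sides `AB` and `CD` extended beyond `A` and `D` meet in a point, which
together with these sides is a nested configuration. -/
lemma le_of_crossing (hcl : IntersectionClosed k S) (hfin : S.Finite) (hA : A ∈ S) (hB : B ∈ S)
    (hC : C ∈ S) (hD : D ∈ S) (h : GeneralPosition k A B C D) (hβ : 0 < β) (hγ : 0 < γ)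
    (hsum : α + γ = β + δ) (hcross : α • A + γ • C = β • B + δ • D) : α ≤ β := by
  by_contra! hlt
  have hαβ : 0 < α - β := sub_pos.2 hlt
  have hδγ : δ - γ = α - β := by linear_combination -hsum
  set X := (α - β)⁻¹ • (α • A - β • B)
  have hXAB : (α - β) • X = α • A - β • B := smul_inv_smul₀ hαβ.ne' _
  have hXDC : (δ - γ) • X = δ • D - γ • C := by
    rw [hδγ, hXAB, sub_eq_sub_iff_add_eq_add, hcross, add_comm]
  have hX_mem_AB : X ∈ line[k, A, B] := by
    apply mem_line_of_smul_eq (α := α) (β := -β) (by simpa [← sub_eq_add_neg] using hαβ.ne')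
    rw [← sub_eq_add_neg, hXAB, neg_smul, sub_eq_add_neg]
  have hX_mem_DC : X ∈ line[k, D, C] := by
    apply mem_line_of_smul_eq (α := δ) (β := -γ) (by simpa [← sub_eq_add_neg, hδγ] using hαβ.ne')
    rw [← sub_eq_add_neg, hXDC, neg_smul, sub_eq_add_neg]
  have hX : X ∈ S := hcl.mem_of_mem_lines hA hB hD hC h.2.1 hX_mem_AB hX_mem_DC
  have hXAB_sbtw : Sbtw k X A B := by
    apply sbtw_of_smul_eq hαβ hβ (ne₁₂_of_not_collinear h.1)
    rw [hXAB, sub_add_cancel, sub_add_cancel]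
  have hXDC_sbtw : Sbtw k X D C := by
    apply sbtw_of_smul_eq (hδγ ▸ hαβ) hγ (ne₂₃_of_not_collinear h.2.2.1).symm
    rw [hXDC, sub_add_cancel, sub_add_cancel]
  refine hcl.not_sbtw_of_sbtw hfin hX hB hA hC hD (fun hXBC => ?_) hXAB_sbtw hXDC_sbtw
  apply notMem_line_of_not_collinear h.1
  rw [← affineSpan_pair_eq_of_mem_of_mem_of_ne hX_mem_AB (right_mem_affineSpan_pair k A B)
    hXAB_sbtw.left_ne_right]
  exact hXBC.mem_affineSpan_of_mem_of_ne (by simp) (by simp) (by simp) hXAB_sbtw.left_ne_right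

lemma add_eq_add_of_crossing (hcl : IntersectionClosed k S) (hfin : S.Finite) (hA : A ∈ S)
    (hB : B ∈ S) (hC : C ∈ S) (hD : D ∈ S) (h : GeneralPosition k A B C D) (hα : 0 < α)
    (hβ : 0 < β) (hγ : 0 < γ) (hδ : 0 < δ) (hsum : α + γ = β + δ)
    (hcross : α • A + γ • C = β • B + δ • D) : A + C = B + D := by
  have hαβ : α ≤ β := hcl.le_of_crossing hfin hA hB hC hD h hβ hγ hsum hcross
  have hβγ : β ≤ γ := hcl.le_of_crossing hfin hB hC hD hA h.rotate hγ hδ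
    (by rw [← hsum, add_comm]) (by rw [← hcross, add_comm])
  have hγδ : γ ≤ δ := hcl.le_of_crossing hfin hC hD hA hB h.rotate.rotate hδ hα
    (by rw [add_comm, hsum, add_comm]) (by rw [add_comm, hcross, add_comm])
  have hδα : δ ≤ α := hcl.le_of_crossing hfin hD hA hB hC h.rotate.rotate.rotate hα hβ
    (by rw [hsum, add_comm]) (by rw [hcross, add_comm])
  obtain rfl : α = β := by order
  obtain rfl : α = γ := by order
  obtain rfl : α = δ := by order
  rw [← smul_add, ← smul_add] at hcross
  exact smul_right_injective V hα.ne' hcross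

/-- The signs of the barycentric coordinates of `D` decide whether one of the four points is
interior to the triangle of the others or which pairs of points are diagonals. -/
lemma exists_add_eq_add (hcl : IntersectionClosed k S) (hfin : S.Finite) (hS : Coplanar k S)
    (hA : A ∈ S) (hB : B ∈ S) (hC : C ∈ S) (hD : D ∈ S) (h : GeneralPosition k A B C D) :
    ∃ P ∈ S, ∃ Q ∈ S, ∃ R ∈ S, ∃ T ∈ S, GeneralPosition k P Q R T ∧ P + R = Q + T := by
  obtain ⟨α, β, γ, hα, hβ, hγ, hsum, rfl⟩ :=
    exists_smul_add_smul_add_smul_eq hS hA hB hC hD h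
  obtain rfl : α = 1 - β - γ := by linear_combination hsum
  rcases hα.lt_or_gt with hα | hα <;> rcases hβ.lt_or_gt with hβ | hβ <;>
    rcases hγ.lt_or_gt with hγ | hγ
  · linarith
  · exact absurd hC (hcl.notMem_of_interior hfin hD hA hB h.rotate.rotate.rotate.1 one_pos
      (neg_pos.2 hα) (neg_pos.2 hβ) (by module))
  · exact absurd hB (hcl.notMem_of_interior hfin hD hA hC h.rotate.rotate.rotate.2.1 one_pos
      (neg_pos.2 hα) (neg_pos.2 hγ) (by module))
  · exact ⟨B, hB, A, hA, C, hC, _, hD, h.swap_left,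
      hcl.add_eq_add_of_crossing hfin hB hA hC hD h.swap_left hβ (neg_pos.2 hα) hγ one_pos
        (by ring) (by module)⟩
  · exact absurd hA (hcl.notMem_of_interior hfin hD hB hC h.rotate.rotate.rotate.2.2.1 one_pos
      (neg_pos.2 hβ) (neg_pos.2 hγ) (by module))
  · exact ⟨A, hA, B, hB, C, hC, _, hD, h,
      hcl.add_eq_add_of_crossing hfin hA hB hC hD h hα (neg_pos.2 hβ) hγ one_pos
        (by ring) (by module)⟩
  · exact ⟨A, hA, C, hC, B, hB, _, hD, h.swap_middle,
      hcl.add_eq_add_of_crossing hfin hA hC hB hD h.swap_middle hα (neg_pos.2 hγ) hβ one_pos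
        (by ring) (by module)⟩
  · exact absurd hD (hcl.notMem_of_interior hfin hA hB hC h.1 hα hβ hγ (by module))

end IntersectionClosed

end ConvexPosition

section Cross

variable {k : Type*} [Field k] {S : Set (k × k)}

lemma cross_subset_preimage_swap (hcross : {(1, 0), (0, 1), (-1, 0), (0, -1)} ⊆ S) :
    {(1, 0), (0, 1), (-1, 0), (0, -1)} ⊆ Prod.swap ⁻¹' S := by
  rintro _ (rfl | rfl | rfl | rfl) <;> exact hcross (by simp)

namespace IntersectionClosed

lemma zero_mem_of_cross [NeZero (2 : k)] (hcl : IntersectionClosed k S)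
    (hcross : {(1, 0), (0, 1), (-1, 0), (0, -1)} ⊆ S) : (0, 0) ∈ S := by
  have h₁ : (1, 0) ∈ S := hcross (by simp)
  have h₂ : (0, 1) ∈ S := hcross (by simp)
  have h₃ : (-1, 0) ∈ S := hcross (by simp)
  have h₄ : (0, -1) ∈ S := hcross (by simp)
  apply hcl.mem_of_det_ne h₁ h₃ h₂ h₄
  · simpa [← neg_add', one_add_one_eq_two] using NeZero.ne (2 : k)
  · simp
  · simp

variable [LinearOrder k] [IsStrictOrderedRing k] {a b e x y : k}

lemma eq_of_crossing_on_axes (hcl : IntersectionClosed k S) (hfin : S.Finite) (ha : 0 < a)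
    (hb : 0 < b) (hA : (a, 0) ∈ S) (hB : (0, 1) ∈ S) (hC : (-b, 0) ∈ S) (hD : (0, -1) ∈ S) :
    a = b := by
  have hpos : GeneralPosition k (a, (0 : k)) (0, 1) (-b, 0) (0, -1) := by
    refine ⟨?_, ?_, ?_, ?_⟩
    all_goals
      refine not_collinear_of_det_ne fun h => ?_
      norm_num at h
      linarith
  have hcross : b • (a, (0 : k)) + a • (-b, (0 : k)) =
      ((a + b) / 2) • ((0 : k), (1 : k)) + ((a + b) / 2) • ((0 : k), (-1 : k)) := by
    ext
    · simp [mul_comm]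
    · simp
  have hsum := hcl.add_eq_add_of_crossing hfin hA hB hC hD hpos hb (by positivity) ha
    (by positivity) (by ring) hcross
  simpa [← sub_eq_add_neg, sub_eq_zero] using congrArg Prod.fst hsum

variable (hcl : IntersectionClosed k S) (hfin : S.Finite)
  (hcross : {(1, 0), (0, 1), (-1, 0), (0, -1)} ⊆ S)
include hcl hfin hcross

lemma eq_zero_or_one_or_neg_one_of_mem_fst_axis (hx : (x, 0) ∈ S) : x = 0 ∨ x = 1 ∨ x = -1 := by
  have h₂ : (0, 1) ∈ S := hcross (by simp)
  have h₄ : (0, -1) ∈ S := hcross (by simp)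
  rcases lt_trichotomy x 0 with hneg | rfl | hpos
  · have := hcl.eq_of_crossing_on_axes hfin one_pos (neg_pos.2 hneg) (hcross (by simp)) h₂
      (by simpa using hx) h₄
    exact .inr (.inr (by linarith))
  · exact .inl rfl
  · exact .inr (.inl (hcl.eq_of_crossing_on_axes hfin hpos one_pos hx h₂ (hcross (by simp)) h₄))

lemma eq_zero_or_one_or_neg_one_of_mem_snd_axis (hy : (0, y) ∈ S) : y = 0 ∨ y = 1 ∨ y = -1 :=
  hcl.preimage_swap.eq_zero_or_one_or_neg_one_of_mem_fst_axis
    (hfin.preimage Prod.swap_injective.injOn) (cross_subset_preimage_swap hcross) hy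

/-- The line through `(e, 0)` and `(x, y)` meets the second axis in a point of `S`. -/
lemma mul_snd_eq_or_of_mem (hxy : (x, y) ∈ S) (hy : y ≠ 0) (he : e ≠ 0) (hex : x ≠ e)
    (hmem : (e, 0) ∈ S) : e * y = e - x ∨ e * y = x - e := by
  have hsub : e - x ≠ 0 := sub_ne_zero.2 hex.symm
  have h₂ : (0, 1) ∈ S := hcross (by simp)
  have h₄ : (0, -1) ∈ S := hcross (by simp)
  have haxis : (0, e * y / (e - x)) ∈ S := by
    apply hcl.mem_of_det_ne hmem hxy h₂ h₄ <;> grind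
  rcases hcl.eq_zero_or_one_or_neg_one_of_mem_snd_axis hfin hcross haxis with h | h | h <;> grind

lemma fst_eq_one_or_neg_one_of_mem (hxy : (x, y) ∈ S) (hx : x ≠ 0) (hy : y ≠ 0) :
    x = 1 ∨ x = -1 := by
  by_contra! hne
  rcases hcl.mul_snd_eq_or_of_mem hfin hcross hxy hy one_ne_zero hne.1 (hcross (by simp))
    with h | h <;>
  rcases hcl.mul_snd_eq_or_of_mem hfin hcross hxy hy (neg_ne_zero.2 one_ne_zero) hne.2
    (hcross (by simp)) with h' | h' <;>
  exact hx (by linarith)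

lemma fst_eq_zero_or_snd_eq_zero_of_mem (hxy : (x, y) ∈ S) : x = 0 ∨ y = 0 := by
  by_contra! hne
  have hy : y = 1 ∨ y = -1 := hcl.preimage_swap.fst_eq_one_or_neg_one_of_mem
    (hfin.preimage Prod.swap_injective.injOn) (cross_subset_preimage_swap hcross) hxy hne.2 hne.1
  rcases hcl.fst_eq_one_or_neg_one_of_mem hfin hcross hxy hne.1 hne.2 with rfl | rfl
  · have := hcl.mul_snd_eq_or_of_mem hfin hcross hxy hne.2 (neg_ne_zero.2 one_ne_zero)
      (by norm_num) (hcross (by simp))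
    rcases hy with rfl | rfl <;> norm_num at this
  · have := hcl.mul_snd_eq_or_of_mem hfin hcross hxy hne.2 one_ne_zero (by norm_num)
      (hcross (by simp))
    rcases hy with rfl | rfl <;> norm_num at this

lemma subset_of_cross : S ⊆ {(0, 0), (1, 0), (0, 1), (-1, 0), (0, -1)} := by
  rintro ⟨x, y⟩ hxy
  rcases hcl.fst_eq_zero_or_snd_eq_zero_of_mem hfin hcross hxy with rfl | rfl
  · rcases hcl.eq_zero_or_one_or_neg_one_of_mem_snd_axis hfin hcross hxy with rfl | rfl | rfl <;>
      simp
  · rcases hcl.eq_zero_or_one_or_neg_one_of_mem_fst_axis hfin hcross hxy with rfl | rfl | rfl <;>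
      simp

end IntersectionClosed

end Cross

section Classification

variable {k V : Type*} [Field k] [AddCommGroup V] [Module k V] {S : Set V} {A B C D : V}

lemma not_collinear_midpoint [Invertible (2 : k)] (hABD : ¬ Collinear k {A, B, D})
    (hsum : A + C = B + D) : ¬ Collinear k {midpoint k A C, A, B} := by
  intro h
  have hO : midpoint k A C ∈ line[k, A, B] :=
    h.mem_affineSpan_of_mem_of_ne (by simp) (by simp) (by simp) (ne₁₂_of_not_collinear hABD)
  have hD : AffineMap.lineMap B (midpoint k A C) (2 : k) = D := by
    rw [AffineMap.lineMap_apply_module, midpoint_eq_smul_add, hsum, smul_smul, mul_invOf_self]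
    module
  apply notMem_line_of_not_collinear hABD
  rw [← hD]
  exact AffineMap.lineMap_mem 2 (right_mem_affineSpan_pair k A B) hO

variable [LinearOrder k] [IsStrictOrderedRing k]

lemma IntersectionClosed.eq_of_add_eq_add (hcl : IntersectionClosed k S) (hfin : S.Finite)
    (hS : Coplanar k S) (hA : A ∈ S) (hB : B ∈ S) (hC : C ∈ S) (hD : D ∈ S)
    (hABD : ¬ Collinear k {A, B, D}) (hsum : A + C = B + D) :
    S = {A, B, C, D, midpoint k A C} := by
  have hO := not_collinear_midpoint hABD hsum
  set O := midpoint k A C with hO_def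
  set φ := frame k O A B
  have hC_eq : C = O + O - A := by
    rw [hO_def, midpoint_add_self, add_sub_cancel_left]
  have hD_eq : D = O + O - B := by
    rw [hO_def, midpoint_add_self, hsum, add_sub_cancel_left]
  have hφ₀ : φ (0, 0) = O := by simp [φ, frame_apply]
  have hφ₁ : φ (1, 0) = A := by simp [φ, frame_apply]
  have hφ₂ : φ (0, 1) = B := by simp [φ, frame_apply]
  have hφ₃ : φ (-1, 0) = C := by rw [frame_apply, hC_eq]; module
  have hφ₄ : φ (0, -1) = D := by rw [frame_apply, hD_eq]; module
  have hφcl := hcl.preimage (frame_injective hO)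
  have hcross : {(1, 0), (0, 1), (-1, 0), (0, -1)} ⊆ φ ⁻¹' S := by
    rintro _ (rfl | rfl | rfl | rfl) <;> simpa only [mem_preimage, hφ₁, hφ₂, hφ₃, hφ₄]
  have hOS : O ∈ S := hφ₀ ▸ hφcl.zero_mem_of_cross hcross
  apply Subset.antisymm
  · intro p hp
    obtain ⟨x, rfl⟩ := exists_frame_eq hS hOS hA hB hO hp
    rcases hφcl.subset_of_cross (hfin.preimage (frame_injective hO).injOn) hcross hp with
      rfl | rfl | rfl | rfl | rfl <;> simp [φ, hφ₀, hφ₁, hφ₂, hφ₃, hφ₄]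
  · rintro _ (rfl | rfl | rfl | rfl | rfl) <;> assumption

theorem fixed_set_classification_general (S : Set V) (hS : S.Finite) (hplane : Coplanar k S)
    (hclosed : IntersectionClosed k S) :
    Collinear k S ∨
    (∃ p ∈ S, Collinear k (S \ {p}) ∧ p ∉ affineSpan k (S \ {p})) ∨
    (∃ A B C D : V, B - A = C - D ∧ ¬ Collinear k {A, B, D} ∧
      S = {A, B, C, D, midpoint k A C}) := by
  by_cases hcol : Collinear k S
  · exact .inl hcol
  by_cases hpencil : IsNearPencil k S
  · exact .inr (.inl hpencil)
  obtain ⟨a, ha, b, hb, c, hc, d, hd, habcd⟩ := exists_generalPosition hcol hpencil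
  obtain ⟨A, hA, B, hB, C, hC, D, hD, hABCD, hsum⟩ :=
    hclosed.exists_add_eq_add hS hplane ha hb hc hd habcd
  refine .inr (.inr ⟨A, B, C, D, ?_, hABCD.2.1,
    hclosed.eq_of_add_eq_add hS hplane hA hB hC hD hABCD.2.1 hsum⟩)
  rw [sub_eq_sub_iff_add_eq_add, ← hsum, add_comm]

end Classification

section Plane

variable {S : Set (ℝ × ℝ)}

lemma intersectionClosed_of_interT_subset (h : interT S ⊆ S) : IntersectionClosed ℝ S := by
  intro a ha b hb c hc d hd hne x hxab hxcd
  by_cases hab : a = b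
  · simp_all
  by_cases hcd : c = d
  · simp_all
  exact h ⟨a, ha, b, hb, c, hc, d, hd, hab, hcd, hne, hxab, hxcd⟩

lemma interT_eq_empty_of_collinear (h : Collinear ℝ S) : interT S = ∅ := by
  rw [eq_empty_iff_forall_notMem]
  rintro x ⟨a, ha, b, hb, c, hc, d, hd, hab, hcd, hne, -, -⟩
  exact hne ((h.affineSpan_eq_of_ne ha hb hab).trans (h.affineSpan_eq_of_ne hc hd hcd).symm)

end Plane

/-- A finite set `S ⊆ ℝ²` fixed under `T` is the empty set, a collinear set together
with one additional point off its line, or the vertices of a nondegenerate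
parallelogram together with the intersection of its diagonals. -/
theorem fixed_set_classification (S : Set (ℝ × ℝ)) (hS : S.Finite) (hfix : interT S = S) :
    S = ∅ ∨
    (∃ p ∈ S, Collinear ℝ (S \ {p}) ∧ p ∉ affineSpan ℝ (S \ {p})) ∨
    (∃ A B C D : ℝ × ℝ, IsParallelogram A B C D ∧ S = {A, B, C, D, midpoint ℝ A C}) := by
  have hplane : Coplanar ℝ S := coplanar_of_finrank_eq_two S (by simp)
  refine (fixed_set_classification_general S hS hplane
    (intersectionClosed_of_interT_subset hfix.subset)).imp (fun hcol => ?_) (Or.imp_right ?_)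
  · rw [← hfix, interT_eq_empty_of_collinear hcol]
  · rintro ⟨A, B, C, D, hsub, hABD, hS_eq⟩
    exact ⟨A, B, C, D, ⟨hsub, sub_ne_zero.2 (ne₁₂_of_not_collinear hABD).symm, hABD⟩, hS_eq⟩
end
end
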